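/- For every graph G in Cact(n;t) with n ≥ 25 and t ≥ 1 that is not isomorphic to G⁰(n,t) and not isomorphic to G5, it holds that D_R(G) ≥ −(4/3)t² + ((4/3)n − 10/3)t + 3n² − (13/3)n − 8, with equality if and only if G is isomorphic to G4. -/

import Mathlib

open Finset

/-- Effective resistance between two vertices of a graph (for a connected graph
this is the effective resistance when every edge is a unit resistor), defined via
the matrix-tree / spanning-two-forest determinant formula. -/
noncomputable def effRes {V : Type*} [Finite V] (G : SimpleGraph V) (u v : V) : ℝ :=
  letI := Fintype.ofFinite V
  letI := Classical.decEq V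
  letI : DecidableRel G.Adj := Classical.decRel _
  if u = v then 0
  else
    Matrix.det ((G.lapMatrix ℝ).submatrix
        (fun w : {w : V // w ≠ u ∧ w ≠ v} => (w : V)) (fun w => (w : V)))
      / Matrix.det ((G.lapMatrix ℝ).submatrix
        (fun w : {w : V // w ≠ u} => (w : V)) (fun w => (w : V)))

/-- The degree resistance distance `D_R(G) = Σ_{ {u,v} ⊆ V } (d(u)+d(v)) R(u,v)`. -/
noncomputable def degRes {V : Type*} [Finite V] (G : SimpleGraph V) : ℝ :=
  letI := Fintype.ofFinite V
  letI := Classical.decEq V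
  letI : DecidableRel G.Adj := Classical.decRel _
  (1 / 2) * ∑ u : V, ∑ v : V, ((G.degree u : ℝ) + (G.degree v : ℝ)) * effRes G u v

/-- The Kirchhoff index `Kf(G) = Σ_{ {u,v} ⊆ V } R(u,v)`. -/
noncomputable def kirchhoffIndex {V : Type*} [Finite V] (G : SimpleGraph V) : ℝ :=
  letI := Fintype.ofFinite V
  (1 / 2) * ∑ u : V, ∑ v : V, effRes G u v

/-- `Kf_v(G) = Σ_{u ∈ V} R(u,v)`. -/
noncomputable def Kfv {V : Type*} [Finite V] (G : SimpleGraph V) (v : V) : ℝ :=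
  letI := Fintype.ofFinite V
  ∑ u : V, effRes G u v

/-- `D_v(G) = Σ_{u ∈ V} d(u) R(u,v)`. -/
noncomputable def Dv {V : Type*} [Finite V] (G : SimpleGraph V) (v : V) : ℝ :=
  letI := Fintype.ofFinite V
  letI := Classical.decEq V
  letI : DecidableRel G.Adj := Classical.decRel _
  ∑ u : V, (G.degree u : ℝ) * effRes G u v

/-- A subgraph is a cycle if it is connected and `2`-regular. -/
def IsCycleSubgraph {V : Type*} {G : SimpleGraph V} (H : G.Subgraph) : Prop :=
  H.coe.Connected ∧ ∀ v ∈ H.verts, {u | H.Adj v u}.ncard = 2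

/-- A cactus is a connected graph in which any two distinct cycles share at most
one vertex (equivalently, every block is an edge or a cycle). -/
def IsCactus {V : Type*} (G : SimpleGraph V) : Prop :=
  G.Connected ∧ ∀ H₁ H₂ : G.Subgraph, IsCycleSubgraph H₁ → IsCycleSubgraph H₂ →
    H₁ ≠ H₂ → (H₁.verts ∩ H₂.verts).ncard ≤ 1

/-- The number of cycles of a graph. -/
noncomputable def numCycles {V : Type*} (G : SimpleGraph V) : ℕ :=
  {H : G.Subgraph | IsCycleSubgraph H}.ncard

/-- `G ∈ Cact(n;t)`: `G` is a cactus with `n` vertices and `t` cycles. -/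
def MemCact {V : Type*} (n t : ℕ) (G : SimpleGraph V) : Prop :=
  IsCactus G ∧ Nat.card V = n ∧ numCycles G = t

/-- `G⁰(n,t)`: `t` triangles (on vertices `2i+1, 2i+2`, `i < t`) and `n - 2t - 1`
pendent edges, all sharing the common vertex `0`. -/
def G0 (n t : ℕ) : SimpleGraph (Fin n) :=
  SimpleGraph.fromRel (fun a b =>
    a.val = 0 ∨ (Odd a.val ∧ b.val = a.val + 1 ∧ b.val ≤ 2 * t))

/-- `G3`: `t` triangles, `n - 2t - 3` pendent edges, and one pendent path of
length 2 (through `2t+1` to `2t+2`), all attached at the common vertex `0`. -/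
def G3g (n t : ℕ) : SimpleGraph (Fin n) :=
  SimpleGraph.fromRel (fun a b =>
    (a.val = 0 ∧ b.val ≠ 2 * t + 2) ∨
    (Odd a.val ∧ b.val = a.val + 1 ∧ b.val ≤ 2 * t) ∨
    (a.val = 2 * t + 1 ∧ b.val = 2 * t + 2))

/-- `G4`: `t` triangles and `n - 2t - 2` pendent edges at the common vertex `0`,
together with one pendent edge (to `2t+1`) attached at the triangle vertex `1`. -/
def G4g (n t : ℕ) : SimpleGraph (Fin n) :=
  SimpleGraph.fromRel (fun a b =>
    (a.val = 0 ∧ b.val ≠ 2 * t + 1) ∨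
    (Odd a.val ∧ b.val = a.val + 1 ∧ b.val ≤ 2 * t) ∨
    (a.val = 1 ∧ b.val = 2 * t + 1))

/-- `G5`: `t - 1` triangles, one quadrilateral `C₄` (on `0, 2t-1, 2t, 2t+1`), and
`n - 2t - 2` pendent edges, all sharing the common vertex `0`. -/
def G5g (n t : ℕ) : SimpleGraph (Fin n) :=
  SimpleGraph.fromRel (fun a b =>
    (a.val = 0 ∧ b.val ≠ 2 * t) ∨
    (Odd a.val ∧ b.val = a.val + 1 ∧ b.val ≤ 2 * t - 2) ∨
    (a.val = 2 * t - 1 ∧ b.val = 2 * t) ∨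
    (a.val = 2 * t ∧ b.val = 2 * t + 1))

/-- `G6`: `t - 1` triangles, one quadrilateral `C₄` (on `0, 2t-1, 2t, 2t+1`), and
`n - 2t - 3` pendent edges at the common vertex `0`, together with one pendent edge
(to `2t+2`) attached at the quadrilateral vertex `2t-1`, which is adjacent to `0`. -/
def G6g (n t : ℕ) : SimpleGraph (Fin n) :=
  SimpleGraph.fromRel (fun a b =>
    (a.val = 0 ∧ b.val ≠ 2 * t ∧ b.val ≠ 2 * t + 2) ∨
    (Odd a.val ∧ b.val = a.val + 1 ∧ b.val ≤ 2 * t - 2) ∨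
    (a.val = 2 * t - 1 ∧ (b.val = 2 * t ∨ b.val = 2 * t + 2)) ∨
    (a.val = 2 * t ∧ b.val = 2 * t + 1))

/-- `G7`: `t - 1` triangles, one quadrilateral `C₄` (on `0, 2t-1, 2t, 2t+1`), and
`n - 2t - 3` pendent edges at the common vertex `0`, together with one pendent edge
(to `2t+2`) attached at the quadrilateral vertex `2t`, which is opposite to `0`. -/
def G7g (n t : ℕ) : SimpleGraph (Fin n) :=
  SimpleGraph.fromRel (fun a b =>
    (a.val = 0 ∧ b.val ≠ 2 * t ∧ b.val ≠ 2 * t + 2) ∨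
    (Odd a.val ∧ b.val = a.val + 1 ∧ b.val ≤ 2 * t - 2) ∨
    (a.val = 2 * t - 1 ∧ b.val = 2 * t) ∨
    (a.val = 2 * t ∧ (b.val = 2 * t + 1 ∨ b.val = 2 * t + 2)))

/-- `G8`: `t - 2` triangles, two quadrilaterals `C₄` (on `0, 2t-3, 2t-2, 2t-1` and
on `0, 2t, 2t+1, 2t+2`), and `n - 2t - 3` pendent edges, all sharing the common
vertex `0`. -/
def G8g (n t : ℕ) : SimpleGraph (Fin n) :=
  SimpleGraph.fromRel (fun a b =>
    (a.val = 0 ∧ b.val ≠ 2 * t - 2 ∧ b.val ≠ 2 * t + 1) ∨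
    (Odd a.val ∧ b.val = a.val + 1 ∧ b.val ≤ 2 * t - 4) ∨
    (a.val = 2 * t - 3 ∧ b.val = 2 * t - 2) ∨
    (a.val = 2 * t - 2 ∧ b.val = 2 * t - 1) ∨
    (a.val = 2 * t ∧ b.val = 2 * t + 1) ∨
    (a.val = 2 * t + 1 ∧ b.val = 2 * t + 2))

/-- `G9`: `t - 1` triangles, one quadrilateral `C₄` (on `0, 2t-1, 2t, 2t+1`), and
`n - 2t - 3` pendent edges at the common vertex `0`, together with one pendent edge
(to `2t+2`) attached at the non-central triangle vertex `1`. -/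
def G9g (n t : ℕ) : SimpleGraph (Fin n) :=
  SimpleGraph.fromRel (fun a b =>
    (a.val = 0 ∧ b.val ≠ 2 * t ∧ b.val ≠ 2 * t + 2) ∨
    (Odd a.val ∧ b.val = a.val + 1 ∧ b.val ≤ 2 * t - 2) ∨
    (a.val = 2 * t - 1 ∧ b.val = 2 * t) ∨
    (a.val = 2 * t ∧ b.val = 2 * t + 1) ∨
    (a.val = 1 ∧ b.val = 2 * t + 2))

/-- `G10`: `t - 1` triangles, one pentagon `C₅` (on `0, 2t-1, 2t, 2t+1, 2t+2`), and
`n - 2t - 3` pendent edges, all sharing the common vertex `0`. -/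
def G10g (n t : ℕ) : SimpleGraph (Fin n) :=
  SimpleGraph.fromRel (fun a b =>
    (a.val = 0 ∧ b.val ≠ 2 * t ∧ b.val ≠ 2 * t + 1) ∨
    (Odd a.val ∧ b.val = a.val + 1 ∧ b.val ≤ 2 * t - 2) ∨
    (a.val = 2 * t - 1 ∧ b.val = 2 * t) ∨
    (a.val = 2 * t ∧ b.val = 2 * t + 1) ∨
    (a.val = 2 * t + 1 ∧ b.val = 2 * t + 2))

open Finset
open scoped Classical in
theorem effRes_eq_of_potential {V : Type*} [Fintype V] (G : SimpleGraph V) (hG : G.Connected)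
    (u v : V) (f : V → ℝ)
    (h : ∀ w, (∑ z, if G.Adj w z then (f w - f z) else 0)
      = (if w = u then 1 else 0) - (if w = v then 1 else 0)) :
    effRes G u v = f u - f v := by
  have hinst : Fintype.ofFinite V = ‹Fintype V› := Subsingleton.elim _ _
  unfold effRes
  by_cases huv : u = v
  · simp [huv]
  simp only [huv, if_false]
  -- Laplacian applied
  have hL : ∀ (g : V → ℝ) w, (G.lapMatrix ℝ).mulVec g w = ∑ z, if G.Adj w z then (g w - g z) else 0 := by
    intro g w
    rw [SimpleGraph.lapMatrix_mulVec_apply, ← SimpleGraph.card_neighborFinset_eq_degree]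
    rw [← Finset.sum_filter, Finset.sum_sub_distrib]
    have : (Finset.univ.filter (fun z => G.Adj w z)) = G.neighborFinset w := by
      ext z; simp
    rw [this]; simp
  set L := G.lapMatrix ℝ with hLdef
  set M : Matrix {w : V // w ≠ u} {w : V // w ≠ u} ℝ :=
    L.submatrix (fun w => (w : V)) (fun w => (w : V)) with hM
  -- extension lemma
  have hext : ∀ (g : V → ℝ), g u = 0 → ∀ w : {w : V // w ≠ u},
      M.mulVec (fun x => g x) w = L.mulVec g w := by
    intro g hg w
    simp only [Matrix.mulVec, dotProduct, hM, Matrix.submatrix_apply]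
    rw [← Finset.sum_subtype (Finset.univ.erase u) (p := fun x => x ≠ u) (by simp)
      (fun x => L w.1 x * g x)]
    rw [Finset.sum_erase]; simp [hg]
  have hdet : M.det ≠ 0 := by
    intro h0
    obtain ⟨x, hx0, hx⟩ := Matrix.exists_mulVec_eq_zero_iff.mpr h0
    set g : V → ℝ := fun w => if hw : w ≠ u then x ⟨w, hw⟩ else 0 with hg
    have hgu : g u = 0 := by simp [hg]
    have hgx : (fun w : {w : V // w ≠ u} => g w) = x := by
      ext w; simp [hg, w.2]
    have hz : ∀ w, w ≠ u → L.mulVec g w = 0 := by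
      intro w hw
      rw [← hext g hgu ⟨w, hw⟩, hgx, hx]; rfl
    have hq : Matrix.toLinearMap₂' ℝ L g g = 0 := by
      rw [Matrix.toLinearMap₂'_apply']
      apply Finset.sum_eq_zero
      intro w _
      by_cases hw : w = u
      · simp [hw, hgu]
      · rw [hz w hw, mul_zero]
    rw [SimpleGraph.lapMatrix_toLinearMap₂'_apply'_eq_zero_iff_forall_reachable] at hq
    apply hx0
    ext w
    rw [← hgx]
    have := hq w u (hG.preconnected w u)
    simp [this, hgu]
  have hvu : v ≠ u := fun h => huv h.symm
  -- Cramer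
  have key : M.det * (f v - f u) = - Matrix.det (L.submatrix
        (fun w : {w : V // w ≠ u ∧ w ≠ v} => (w : V)) (fun w => (w : V))) := by
    set g : V → ℝ := fun w => f w - f u with hg
    set v' : {w : V // w ≠ u} := ⟨v, hvu⟩
    have h1 : M.mulVec (fun x => g x) = Pi.single v' (-1 : ℝ) := by
      ext w
      rw [hext g (by simp [hg]), hL]
      have := h w
      simp only [hg, sub_sub_sub_cancel_right]
      rw [this]
      have hw := w.2
      by_cases hwv : w = v'
      · subst hwv; simp [v', hvu]
      · have : (w : V) ≠ v := fun h => hwv (Subtype.ext h)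
        simp [hw, this, hwv]
    have h2 : M.det • (fun x : {w : V // w ≠ u} => g x) = M.cramer (Pi.single v' (-1 : ℝ)) := by
      rw [← h1, Matrix.cramer_eq_adjugate_mulVec, Matrix.mulVec_mulVec, Matrix.adjugate_mul,
        Matrix.smul_mulVec, Matrix.one_mulVec]
    have h3 := congrFun h2 v'
    have h3 : M.det * (f v - f u) = M.cramer (Pi.single v' (-1)) v' := h3
    rw [h3, Matrix.cramer_apply]
    have h4 : (Pi.single v' (-1 : ℝ)) = (-1 : ℝ) • Pi.single v' (1 : ℝ) := by
      ext w; simp [Pi.single_apply]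
    rw [h4, Matrix.det_updateCol_smul, neg_one_mul]
    congr 1
    rw [Matrix.twoBlockTriangular_det _ (fun w => w = v')]
    · have e1 : (Matrix.toSquareBlockProp (M.updateCol v' (Pi.single v' (1:ℝ))) (fun i => i = v')).det = 1 := by
        have hun : Unique {i : {w : V // w ≠ u} // i = v'} :=
          ⟨⟨⟨v', rfl⟩⟩, fun x => Subtype.ext (by simpa using x.2)⟩
        rw [Matrix.det_unique]
        have : (default : {i : {w : V // w ≠ u} // i = v'}).1 = v' := (default : {i : {w : V // w ≠ u} // i = v'}).2
        simp [Matrix.toSquareBlockProp, Matrix.toBlock, this]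
      refine (congrArg₂ (· * ·) ?_ ?_).trans (one_mul _)
      · convert e1
      let e : {w : V // w ≠ u ∧ w ≠ v} ≃ {i : {w : V // w ≠ u} // ¬ i = v'} :=
        { toFun := fun w => ⟨⟨w, w.2.1⟩, fun h => w.2.2 (congrArg Subtype.val h)⟩
          invFun := fun w => ⟨w.1.1, w.1.2, fun h => w.2 (Subtype.ext h)⟩
          left_inv := fun _ => rfl
          right_inv := fun _ => rfl }
      rw [← Matrix.det_submatrix_equiv_self e]
      congr 1
      ext i j
      have : ((e j : {w : V // w ≠ u})) ≠ v' := (e j).2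
      change (M.updateCol v' (Pi.single v' (1:ℝ))) (e i).1 (e j).1 = _
      rw [Matrix.updateCol_ne this]
      rfl
    · intro i hi j hj
      rw [hj]
      simp [hi]
  have key' : Matrix.det (L.submatrix
        (fun w : {w : V // w ≠ u ∧ w ≠ v} => (w : V)) (fun w => (w : V))) / M.det = f u - f v := by
    rw [div_eq_iff hdet]; linarith
  convert key' using 3 <;> (simp only [hM, hLdef]; congr!)

open Finset

noncomputable def rr (k : ℕ) (i j : Fin k) : ℝ :=
  (if k = 2 then 2 else 1) * (((i - j).val : ℝ) * (k - (i - j).val) / k)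

theorem rr_self (k : ℕ) (i : Fin k) : rr k i i = 0 := by
  rcases k with _ | k
  · exact i.elim0
  · simp [rr]

theorem rr_symm (k : ℕ) (i j : Fin k) : rr k i j = rr k j i := by
  by_cases h : i = j
  · rw [h]
  have hk : (i - j).val + (j - i).val = k := by
    rcases lt_or_gt_of_ne h with h | h
    · rw [Fin.coe_sub_iff_lt.mpr h, Fin.sub_val_of_le h.le]
      have := i.2; have := j.2; have : i.val < j.val := h; omega
    · rw [Fin.coe_sub_iff_lt.mpr h, Fin.sub_val_of_le h.le]
      have := i.2; have := j.2; have : j.val < i.val := h; omega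
  have hk' : ((i - j).val : ℝ) = k - (j - i).val := by
    rw [eq_sub_iff_add_eq]; exact_mod_cast hk
  unfold rr
  rw [hk']; ring

theorem rr_nonneg (k : ℕ) (i j : Fin k) : 0 ≤ rr k i j := by
  unfold rr
  have : ((i - j).val : ℝ) ≤ k := by exact_mod_cast (i - j).2.le
  have h2 : (0:ℝ) ≤ k - (i - j).val := by linarith
  split_ifs <;> positivity

theorem rr_two (i j : Fin 2) (h : i ≠ j) : rr 2 i j = 1 := by
  have : (i - j).val = 1 := by
    fin_cases i <;> fin_cases j <;> simp_all
  simp only [rr, this]; norm_num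

theorem rr_three (i j : Fin 3) (h : i ≠ j) : rr 3 i j = 2 / 3 := by
  have : (i - j).val = 1 ∨ (i - j).val = 2 := by
    revert i j; decide
  rcases this with h | h <;> simp only [rr, h] <;> norm_num

theorem rr_four (i j : Fin 4) (h : i ≠ j) : 3 / 4 ≤ rr 4 i j := by
  have : (i - j).val = 1 ∨ (i - j).val = 2 ∨ (i - j).val = 3 := by
    revert i j; decide
  rcases this with h | h | h <;> simp only [rr, h] <;> norm_num

theorem rr_sum (k : ℕ) (hk : 2 ≤ k) (i : Fin k) :
    ∑ j, rr k i j = if k = 2 then 1 else ((k : ℝ) ^ 2 - 1) / 6 := by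
  obtain ⟨m, rfl⟩ : ∃ m, k = m + 1 := ⟨k - 1, by omega⟩
  have h1 : ∑ j, rr (m+1) i j = (if m + 1 = 2 then (2:ℝ) else 1) *
      ∑ d : Fin (m+1), ((d.val : ℝ) * ((m + 1 : ℕ) - d.val) / (m + 1 : ℕ)) := by
    rw [Finset.mul_sum]
    exact Fintype.sum_equiv (Equiv.subLeft i) _ _ (fun j => by simp [rr])
  have h2 : ∀ (K : ℝ) (N : ℕ), ∑ d ∈ Finset.range N, ((d : ℝ) * (K - d) / K) =
      ((N:ℝ) * (N - 1) / 2 * K - N * (N - 1) * (2 * N - 1) / 6) / K := by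
    intro K N
    induction N with
    | zero => simp
    | succ N ih => rw [Finset.sum_range_succ, ih]; push_cast; ring
  rw [h1, Fin.sum_univ_eq_sum_range (fun d => ((d : ℝ) * ((m + 1 : ℕ) - d) / (m + 1 : ℕ))) (m+1), h2]
  have : ((m:ℝ) + 1) ≠ 0 := by positivity
  split_ifs with h
  · have : m = 1 := by omega
    subst this; norm_num
  · push_cast; field_simp; ring

/-- Laplacian of the resistance function on a cycle. -/
theorem rr_lap (k : ℕ) (hk : 2 ≤ k) (i j : Fin k) :
    (∑ l, if (SimpleGraph.cycleGraph k).Adj j l then rr k i l - rr k i j else 0)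
      = 2 * ((if i = j then 1 else 0) - 1 / (k : ℝ)) := by
  obtain ⟨m, rfl⟩ : ∃ m, k = m + 2 := ⟨k - 2, by omega⟩
  rcases m with _ | m
  · -- k = 2
    fin_cases i <;> fin_cases j <;>
      simp [Fin.sum_univ_two, SimpleGraph.cycleGraph_adj, rr] <;> norm_num
  · rw [← Finset.sum_filter]
    have : (Finset.univ.filter (fun l => (SimpleGraph.cycleGraph (m+1+2)).Adj j l)) = {j - 1, j + 1} := by
      rw [← SimpleGraph.cycleGraph_neighborFinset]; ext; simp
    rw [this, Finset.sum_pair]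
    · set d := i - j with hd
      have e1 : i - (j - 1) = d + 1 := by rw [hd]; abel
      have e2 : i - (j + 1) = d - 1 := by rw [hd]; abel
      have hdl := d.2
      simp only [rr, e1, e2, ← hd]
      have hij : (i = j) ↔ d = 0 := by rw [hd, sub_eq_zero]
      simp only [hij]
      have hk3 : ¬ (m + 1 + 2 = 2) := by omega
      simp only [hk3, if_false, one_mul]
      have hmpos : ((m:ℝ) + 3) ≠ 0 := by positivity
      have f1 : ((d+1).val : ℝ) * (((m+1+2:ℕ):ℝ) - (d+1).val) = (d.val + 1) * (((m+1+2:ℕ):ℝ) - (d.val + 1)) := by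
        rw [Fin.val_add_one]
        split_ifs with h
        · rw [h]; simp; right; ring
        · push_cast; ring
      rw [f1]
      by_cases h0 : d = 0
      · rw [h0]
        have : ((0 - 1 : Fin (m+1+2))).val = m + 2 := by
          simp
        rw [this]
        simp only [if_true, Fin.val_zero]
        push_cast
        field_simp
        ring
      · have : (d - 1).val = d.val - 1 := Fin.val_sub_one_of_ne_zero h0
        have hd1 : 1 ≤ d.val := Nat.one_le_iff_ne_zero.mpr (fun h => h0 (Fin.ext h))
        rw [this]
        simp only [h0, if_false]
        push_cast [hd1]
        field_simp
        ring
    · intro h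
      have : (SimpleGraph.cycleGraph (m+3)).degree j = 2 := SimpleGraph.cycleGraph_degree_three_le
      rw [SimpleGraph.cycleGraph_degree_two_le, h] at this
      simp at this

open Finset

structure Blk {V : Type*} (G : SimpleGraph V) where
  k : ℕ
  hk : 2 ≤ k
  c : Fin k → V
  pr : V → Fin k
  hpr : ∀ i, pr (c i) = i
  adj : ∀ i j, (SimpleGraph.cycleGraph k).Adj i j → G.Adj (c i) (c j)
  cross : ∀ w z, G.Adj w z → pr w ≠ pr z →
    w = c (pr w) ∧ z = c (pr z) ∧ (SimpleGraph.cycleGraph k).Adj (pr w) (pr z)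

namespace Blk
variable {V : Type*} {G : SimpleGraph V}

theorem c_inj (B : Blk G) : Function.Injective B.c := fun i j h => by
  rw [← B.hpr i, ← B.hpr j, h]

noncomputable def res (B : Blk G) (u v : V) : ℝ := rr B.k (B.pr u) (B.pr v)

open scoped Classical in
theorem sum_cross [Fintype V] (B : Blk G) (w : V) (g : Fin B.k → ℝ) :
    (∑ z, if G.Adj w z ∧ B.pr w ≠ B.pr z then g (B.pr z) else 0) =
      if w = B.c (B.pr w) then
        ∑ l, if (SimpleGraph.cycleGraph B.k).Adj (B.pr w) l then g l else 0 else 0 := by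
  split_ifs with h
  · rw [← Finset.sum_filter, ← Finset.sum_filter]
    symm
    apply Finset.sum_bij (fun l _ => B.c l)
    · intro l hl
      simp only [Finset.mem_filter, Finset.mem_univ, true_and] at hl ⊢
      refine ⟨?_, ?_⟩
      · rw [h]; exact B.adj _ _ hl
      · rw [B.hpr]; exact hl.ne
    · intro a _ b _ hab; exact B.c_inj hab
    · intro z hz
      simp only [Finset.mem_filter, Finset.mem_univ, true_and] at hz
      obtain ⟨h1, h2, h3⟩ := B.cross w z hz.1 hz.2
      exact ⟨B.pr z, by simpa using h3, h2.symm⟩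
    · intro l _; rw [B.hpr]
  · apply Finset.sum_eq_zero
    intro z _
    rw [if_neg]
    rintro ⟨h1, h2⟩
    exact h (B.cross w z h1 h2).1

open scoped Classical in
theorem lap_res [Fintype V] (B : Blk G) (u w : V) :
    (∑ z, if G.Adj w z then B.res u z - B.res u w else 0) =
      if w = B.c (B.pr w) then 2 * ((if B.pr u = B.pr w then 1 else 0) - 1 / (B.k : ℝ)) else 0 := by
  have h1 : (∑ z, if G.Adj w z then B.res u z - B.res u w else 0) =
      ∑ z, if G.Adj w z ∧ B.pr w ≠ B.pr z then
        (fun l => rr B.k (B.pr u) l - rr B.k (B.pr u) (B.pr w)) (B.pr z) else 0 := by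
    apply Finset.sum_congr rfl
    intro z _
    by_cases hz : G.Adj w z
    · by_cases hp : B.pr w = B.pr z
      · simp [hp, res]
      · simp [hz, hp, res]
    · simp [hz]
  have h2 := B.sum_cross w (fun l => rr B.k (B.pr u) l - rr B.k (B.pr u) (B.pr w))
  have h3 := rr_lap _ B.hk (B.pr u) (B.pr w)
  rw [h1]
  refine Eq.trans ?_ (h2.trans ?_)
  · congr!
  · simp only [h3]

end Blk

/-- A block decomposition: each edge crosses exactly one block. -/
def IsDecomp {V β : Type*} {G : SimpleGraph V} (B : β → Blk G) : Prop :=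
  ∀ w z, G.Adj w z → ∃! b, (B b).pr w ≠ (B b).pr z

section
variable {V β : Type*} {G : SimpleGraph V} [Fintype V] [Fintype β]

open scoped Classical in
theorem decomp_delta (hG : G.Connected) (B : β → Blk G) (hB : IsDecomp B) (w u v : V) :
    ∑ b, (if w = (B b).c ((B b).pr w) then
      ((if (B b).pr u = (B b).pr w then (1:ℝ) else 0) - (if (B b).pr v = (B b).pr w then 1 else 0)) else 0)
     = (if w = u then 1 else 0) - (if w = v then 1 else 0) := by
  obtain ⟨p⟩ := hG.preconnected u v
  induction p with
  | nil => simp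
  | @cons u x v h p ih =>
    have step : ∑ b, (if w = (B b).c ((B b).pr w) then
      ((if (B b).pr u = (B b).pr w then (1:ℝ) else 0) - (if (B b).pr x = (B b).pr w then 1 else 0)) else 0)
     = (if w = u then 1 else 0) - (if w = x then 1 else 0) := by
      obtain ⟨b, hb, hu⟩ := hB u x h
      rw [Finset.sum_eq_single b]
      · obtain ⟨h1, h2, h3⟩ := (B b).cross u x h hb
        by_cases hw : w = (B b).c ((B b).pr w)
        · have a1 : ((B b).pr u = (B b).pr w) ↔ w = u :=
            ⟨fun e => by rw [hw, ← e, ← h1], fun e => by rw [e]⟩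
          have a2 : ((B b).pr x = (B b).pr w) ↔ w = x :=
            ⟨fun e => by rw [hw, ← e, ← h2], fun e => by rw [e]⟩
          rw [if_pos hw]
          simp only [a1, a2]
        · rw [if_neg hw]
          have a1 : w ≠ u := by rintro rfl; exact hw h1
          have a2 : w ≠ x := by rintro rfl; exact hw h2
          simp [a1, a2]
      · intro b' _ hb'
        have : (B b').pr u = (B b').pr x := by
          by_contra hne; exact hb' (hu b' hne)
        simp [this]
      · simp
    have := congrArg₂ (· + ·) step ih
    simp only [← Finset.sum_add_distrib] at this
    convert this using 1
    · apply Finset.sum_congr rfl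
      intro b _
      split_ifs <;> ring
    · ring

theorem effRes_decomp (hG : G.Connected) (B : β → Blk G) (hB : IsDecomp B) (u v : V) :
    effRes G u v = ∑ b, (B b).res u v := by
  classical
  rw [effRes_eq_of_potential G hG u v (fun w => ∑ b, (1/2) * ((B b).res v w - (B b).res u w))]
  · rw [← Finset.sum_sub_distrib]
    apply Finset.sum_congr rfl
    intro b _
    simp only [Blk.res, rr_self]
    rw [rr_symm _ ((B b).pr v)]; ring
  · intro w
    rw [← decomp_delta hG B hB w u v]
    have : ∀ z, (if G.Adj w z then (∑ b, (1/2) * ((B b).res v w - (B b).res u w)) - (∑ b, (1/2) * ((B b).res v z - (B b).res u z)) else 0)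
       = ∑ b, ((1/2) * (if G.Adj w z then (B b).res u z - (B b).res u w else 0) - (1/2) * (if G.Adj w z then (B b).res v z - (B b).res v w else 0)) := by
      intro z
      split_ifs
      · rw [← Finset.sum_sub_distrib]
        apply Finset.sum_congr rfl
        intro b _; ring
      · simp
    rw [Finset.sum_congr rfl (fun z _ => this z), Finset.sum_comm]
    apply Finset.sum_congr rfl
    intro b _
    rw [Finset.sum_sub_distrib, ← Finset.mul_sum, ← Finset.mul_sum, Blk.lap_res, Blk.lap_res]
    split_ifs <;> ring

theorem decomp_count (hG : G.Connected) (B : β → Blk G) (hB : IsDecomp B) :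
    ∑ b, (((B b).k : ℝ) - 1) = Fintype.card V - 1 := by
  classical
  obtain ⟨u⟩ := hG.nonempty
  have h := fun w => decomp_delta hG B hB w u w
  have h2 := Finset.sum_congr (rfl : (Finset.univ : Finset V) = Finset.univ) (fun w _ => h w)
  rw [Finset.sum_comm] at h2
  have h3 : ∀ b, ∑ w, (if w = (B b).c ((B b).pr w) then
      ((if (B b).pr u = (B b).pr w then (1:ℝ) else 0) - (if (B b).pr w = (B b).pr w then 1 else 0)) else 0)
      = 1 - (B b).k := by
    intro b
    rw [← Finset.sum_filter]
    have : ∑ i : Fin (B b).k, ((if (B b).pr u = i then (1:ℝ) else 0) - 1) = 1 - (B b).k := by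
      simp [Finset.sum_sub_distrib]
    rw [← this]
    symm
    apply Finset.sum_bij (fun i _ => (B b).c i)
    · intro i _; simp [(B b).hpr]
    · intro i _ j _ h; exact (B b).c_inj h
    · intro w hw; simp only [Finset.mem_filter, Finset.mem_univ, true_and] at hw
      exact ⟨_, Finset.mem_univ _, hw.symm⟩
    · intro i _; simp [(B b).hpr]
  rw [Finset.sum_congr rfl (fun b _ => h3 b)] at h2
  have h4 : ∑ b, (((B b).k : ℝ) - 1) = - ∑ b, (1 - ((B b).k : ℝ)) := by
    rw [← Finset.sum_neg_distrib]; apply Finset.sum_congr rfl; intros; ring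
  rw [h4, h2]
  simp [Finset.sum_sub_distrib]
end

open Finset

/-- degree of a vertex within its block -/
noncomputable def gam (k : ℕ) : ℝ := if k = 2 then 1 else 2

theorem gam_sum (k : ℕ) (hk : 2 ≤ k) (j : Fin k) :
    (∑ l, if (SimpleGraph.cycleGraph k).Adj j l then (1:ℝ) else 0) = gam k := by
  rw [← Finset.sum_filter]
  have : (Finset.univ.filter (fun l => (SimpleGraph.cycleGraph k).Adj j l)) =
      (SimpleGraph.cycleGraph k).neighborFinset j := by ext; simp
  rw [this, Finset.sum_const, SimpleGraph.card_neighborFinset_eq_degree]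
  obtain ⟨m, rfl⟩ : ∃ m, k = m + 2 := ⟨k - 2, by omega⟩
  rcases m with _ | m
  · have : (SimpleGraph.cycleGraph 2).degree j = 1 := by revert j; decide
    simp [gam, this]
  · rw [SimpleGraph.cycleGraph_degree_three_le]
    simp [gam]

open scoped Classical in
theorem degree_sum {V : Type*} [Fintype V] (G : SimpleGraph V) (w : V) :
    (G.degree w : ℝ) = ∑ z, if G.Adj w z then (1:ℝ) else 0 := by
  rw [← SimpleGraph.card_neighborFinset_eq_degree, Finset.card_eq_sum_ones]
  push_cast
  rw [← Finset.sum_filter]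
  congr 1
  ext; simp

namespace Blk
variable {V : Type*} {G : SimpleGraph V} [Fintype V]

open scoped Classical in
noncomputable def fib (B : Blk G) (i : Fin B.k) : Finset V := Finset.univ.filter (fun w => B.pr w = i)

noncomputable def a (B : Blk G) (i : Fin B.k) : ℕ := (B.fib i).card - 1

open scoped Classical in
noncomputable def D (B : Blk G) (i : Fin B.k) : ℝ := ∑ w ∈ B.fib i, (G.degree w : ℝ)

noncomputable def s (B : Blk G) (i : Fin B.k) : ℝ := (B.D i - gam B.k) / 2 - B.a i

theorem mem_fib (B : Blk G) (i : Fin B.k) (w : V) : w ∈ B.fib i ↔ B.pr w = i := by simp [fib]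

theorem fib_card (B : Blk G) (i : Fin B.k) : (B.fib i).card = B.a i + 1 := by
  have : 0 < (B.fib i).card := Finset.card_pos.mpr ⟨B.c i, by simp [fib, B.hpr]⟩
  unfold a; omega

theorem sum_a (B : Blk G) : ∑ i, B.a i + B.k = Fintype.card V := by
  classical
  have h : Fintype.card V = ∑ i, (B.fib i).card := by
    rw [← Finset.card_univ]
    exact Finset.card_eq_sum_card_fiberwise (f := B.pr) (t := Finset.univ) (by simp [Set.MapsTo])
  rw [h, Finset.sum_congr rfl (fun i _ => B.fib_card i), Finset.sum_add_distrib]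
  simp

open scoped Classical in
theorem sum_cross_one (B : Blk G) (w : V) :
    (∑ z, if G.Adj w z ∧ B.pr w ≠ B.pr z then (1:ℝ) else 0) =
      if w = B.c (B.pr w) then gam B.k else 0 := by
  have h := B.sum_cross w (fun _ => 1)
  have h3 := gam_sum _ B.hk (B.pr w)
  refine Eq.trans ?_ (h.trans ?_)
  · congr!
  · simp only [h3]

open scoped Classical in
theorem sum_cross_tot (B : Blk G) :
    (∑ w, ∑ z, if G.Adj w z ∧ B.pr w ≠ B.pr z then (1:ℝ) else 0) = B.k * gam B.k := by
  rw [Finset.sum_congr rfl (fun w _ => B.sum_cross_one w), ← Finset.sum_filter]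
  have : (Finset.univ.filter (fun w => w = B.c (B.pr w))) = Finset.univ.map ⟨B.c, B.c_inj⟩ := by
    ext w
    simp only [Finset.mem_filter, Finset.mem_univ, true_and, Finset.mem_map, Function.Embedding.coeFn_mk]
    constructor
    · intro h; exact ⟨_, h.symm⟩
    · rintro ⟨i, rfl⟩; rw [B.hpr]
  rw [this]; simp

open scoped Classical in
theorem D_eq (B : Blk G) (i : Fin B.k) :
    B.D i = gam B.k + ∑ w ∈ B.fib i, ∑ z ∈ B.fib i, if G.Adj w z then (1:ℝ) else 0 := by
  unfold D
  have h : ∀ w ∈ B.fib i, (G.degree w : ℝ) = (if w = B.c i then gam B.k else 0) +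
      ∑ z ∈ B.fib i, if G.Adj w z then (1:ℝ) else 0 := by
    intro w hw
    rw [mem_fib] at hw
    rw [degree_sum, ← hw, ← B.sum_cross_one w, fib, Finset.sum_filter, ← Finset.sum_add_distrib]
    apply Finset.sum_congr rfl
    intro z _
    by_cases h1 : G.Adj w z <;> by_cases h2 : B.pr w = B.pr z <;> simp [h1, h2, eq_comm]
  rw [Finset.sum_congr rfl h, Finset.sum_add_distrib]
  congr 1
  rw [Finset.sum_ite_eq', if_pos]
  rw [mem_fib, B.hpr]

theorem fib_reach (B : Blk G) (i : Fin B.k) {w x : V} (p : G.Walk w x) (hx : x = B.c i)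
    (hw : B.pr w = i) : (G.induce {w | B.pr w = i}).Reachable ⟨w, hw⟩ ⟨B.c i, B.hpr i⟩ := by
  induction p with
  | nil => subst hx; exact SimpleGraph.Reachable.refl _
  | @cons w z x h p ih =>
    by_cases hz : B.pr z = i
    · refine SimpleGraph.Reachable.trans ?_ (ih hx hz)
      apply SimpleGraph.Adj.reachable
      simpa using h
    · have := (B.cross w z h (by rw [hw]; exact fun e => hz e.symm)).1
      rw [hw] at this
      subst this
      exact SimpleGraph.Reachable.refl _

theorem fib_conn (B : Blk G) (hG : G.Connected) (i : Fin B.k) :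
    (G.induce {w | B.pr w = i}).Connected := by
  rw [SimpleGraph.connected_iff_exists_forall_reachable]
  refine ⟨⟨B.c i, B.hpr i⟩, fun ⟨w, hw⟩ => ?_⟩
  obtain ⟨p⟩ := hG.preconnected w (B.c i)
  exact (B.fib_reach i p rfl hw).symm

theorem s_nonneg (B : Blk G) (hG : G.Connected) (i : Fin B.k) : 0 ≤ B.s i := by
  classical
  have hc := (B.fib_conn hG i).card_vert_le_card_edgeSet_add_one
  have hs := (G.induce {w | B.pr w = i}).sum_degrees_eq_twice_card_edges
  have h1 : Nat.card {w | B.pr w = i} = B.a i + 1 := by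
    rw [← B.fib_card i]
    simp [fib, Fintype.card_subtype]
  have h2 : Nat.card (G.induce {w | B.pr w = i}).edgeSet = (G.induce {w | B.pr w = i}).edgeFinset.card := by
    rw [Nat.card_eq_fintype_card, SimpleGraph.edgeFinset_card]
  have h3 : ((∑ v, (G.induce {w | B.pr w = i}).degree v : ℕ) : ℝ) =
      ∑ w ∈ B.fib i, ∑ z ∈ B.fib i, if G.Adj w z then (1:ℝ) else 0 := by
    push_cast
    rw [Finset.sum_subtype (B.fib i) (p := fun w => w ∈ {w | B.pr w = i}) (by simp [mem_fib])]
    apply Finset.sum_congr (by congr!)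
    intro w _
    have := degree_sum (G.induce {w | B.pr w = i}) w
    rw [Finset.sum_subtype (B.fib i) (p := fun w => w ∈ {w | B.pr w = i}) (by simp [mem_fib])]
    simp only [SimpleGraph.comap_adj, Function.Embedding.subtype_apply] at this
    convert this using 1
    congr!
  have h4 : (B.a i + 1 : ℝ) ≤ (G.induce {w | B.pr w = i}).edgeFinset.card + 1 := by
    rw [h1, h2] at hc; exact_mod_cast hc
  unfold s
  rw [D_eq, ← h3, hs]
  push_cast
  linarith

theorem s_small (B : Blk G) (hG : G.Connected) (i : Fin B.k) (hi : B.a i ≤ 1) : B.s i = 0 := by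
  classical
  apply le_antisymm _ (B.s_nonneg hG i)
  have h : ∑ w ∈ B.fib i, ∑ z ∈ B.fib i, (if G.Adj w z then (1:ℝ) else 0) ≤ (B.a i + 1) * B.a i := by
    have : ∀ w ∈ B.fib i, ∑ z ∈ B.fib i, (if G.Adj w z then (1:ℝ) else 0) ≤ B.a i := by
      intro w hw
      rw [← Finset.sum_erase (a := w) (B.fib i) (by simp)]
      calc _ ≤ ∑ z ∈ (B.fib i).erase w, (1:ℝ) := by
            apply Finset.sum_le_sum; intro z _; split_ifs <;> norm_num
        _ = B.a i := by
            rw [Finset.sum_const, Finset.card_erase_of_mem hw]; simp [a]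
    refine (Finset.sum_le_sum this).trans ?_
    rw [Finset.sum_const, B.fib_card]; simp
  unfold s
  rw [D_eq]
  have : B.a i = 0 ∨ B.a i = 1 := by omega
  rcases this with h0 | h0 <;> rw [h0] at h ⊢ <;> push_cast at * <;> linarith

noncomputable def Q (B : Blk G) : ℝ :=
  ∑ i, ∑ j, (2 * (B.a i : ℝ) * B.a j + 2 * B.s i * B.a j) * rr B.k i j

noncomputable def val (B : Blk G) : ℝ := ∑ i, ∑ j, B.D i * ((B.fib j).card : ℝ) * rr B.k i j

open scoped Classical in
theorem val_eq (B : Blk G) : ∑ u, ∑ v, (G.degree u : ℝ) * B.res u v = B.val := by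
  unfold val D
  have h1 : ∀ u, ∑ v, (G.degree u : ℝ) * B.res u v
      = ∑ j, (G.degree u : ℝ) * ((B.fib j).card : ℝ) * rr B.k (B.pr u) j := by
    intro u
    rw [← Finset.sum_fiberwise_of_maps_to (s := Finset.univ) (t := Finset.univ) (g := B.pr) (by simp)]
    apply Finset.sum_congr rfl
    intro j _
    rw [Finset.sum_congr rfl (g := fun v => (G.degree u : ℝ) * rr B.k (B.pr u) j)]
    · rw [Finset.sum_const, fib]; simp; ring
    · intro v hv
      simp only [Finset.mem_filter] at hv
      rw [res, hv.2]
  rw [Finset.sum_congr rfl (fun u _ => h1 u)]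
  rw [← Finset.sum_fiberwise_of_maps_to (s := Finset.univ) (t := Finset.univ) (g := B.pr) (by simp)]
  apply Finset.sum_congr rfl
  intro i _
  rw [Finset.sum_comm]
  apply Finset.sum_congr rfl
  intro j _
  rw [Finset.sum_mul, Finset.sum_mul]
  apply Finset.sum_congr rfl
  intro u hu
  simp only [Finset.mem_filter] at hu
  rw [hu.2]

theorem val_formula (B : Blk G) :
    B.val = (if B.k = 2 then 1 else ((B.k : ℝ) ^ 2 - 1) / 6) *
      (gam B.k * B.k + (2 + gam B.k) * ((∑ i, B.a i : ℕ) : ℝ) + 2 * ∑ i, B.s i) + B.Q := by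
  set ρ : ℝ := (if B.k = 2 then 1 else ((B.k : ℝ) ^ 2 - 1) / 6) with hρ
  have hrow : ∀ i, ∑ j, rr B.k i j = ρ := fun i => rr_sum _ B.hk i
  have hcol : ∀ j, ∑ i, rr B.k i j = ρ := fun j => by
    rw [← hrow j]; apply Finset.sum_congr rfl; intro i _; rw [rr_symm]
  have hD : ∀ i, B.D i = gam B.k + 2 * B.a i + 2 * B.s i := by intro i; unfold s; ring
  have hval : B.val = ∑ i, ∑ j, ((gam B.k + 2 * B.a i + 2 * B.s i) * rr B.k i j)
      + ∑ i, ∑ j, gam B.k * B.a j * rr B.k i j + B.Q := by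
    unfold val Q
    rw [← Finset.sum_add_distrib, ← Finset.sum_add_distrib]
    apply Finset.sum_congr rfl; intro i _
    rw [← Finset.sum_add_distrib, ← Finset.sum_add_distrib]
    apply Finset.sum_congr rfl; intro j _
    rw [hD, fib_card]; push_cast; ring
  rw [hval]
  congr 1
  rw [Finset.sum_comm (f := fun i j => gam B.k * B.a j * rr B.k i j)]
  simp only [← Finset.mul_sum, hrow, hcol]
  rw [← Finset.sum_mul, ← Finset.sum_mul, Finset.sum_add_distrib, Finset.sum_add_distrib]
  simp only [← Finset.mul_sum, Finset.sum_const, Finset.card_univ, Fintype.card_fin, nsmul_eq_mul]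
  push_cast
  ring

theorem sum_s (B : Blk G) : (∑ i, B.D i) = gam B.k * B.k + 2 * ((∑ i, B.a i : ℕ) : ℝ) + 2 * ∑ i, B.s i := by
  have hD : ∀ i, B.D i = gam B.k + 2 * B.a i + 2 * B.s i := by intro i; unfold s; ring
  simp only [hD, Finset.sum_add_distrib, ← Finset.mul_sum, Finset.sum_const, Finset.card_univ, Fintype.card_fin, nsmul_eq_mul]
  push_cast; ring

open scoped Classical in
theorem sum_D (B : Blk G) : (∑ i, B.D i) = ∑ w, (G.degree w : ℝ) := by
  unfold D fib
  exact Finset.sum_fiberwise_of_maps_to (s := Finset.univ) (t := Finset.univ) (g := B.pr) (by simp) _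

end Blk

open Finset

noncomputable def baseExc (k : ℕ) (n t : ℝ) : ℝ :=
  if k = 2 then 0 else ((k:ℝ)^2 - 1) / 3 * (2 * n - k + t - 1) - (8/3) * (2 * n + t - 4)
    - (k - 3) * (3 * n - 4 + 2 * t)

noncomputable def Blk.exc {V : Type*} {G : SimpleGraph V} [Fintype V] (B : Blk G) (n t : ℝ) : ℝ :=
  baseExc B.k n t + B.Q

section
variable {V β : Type*} {G : SimpleGraph V} [Fintype V] [Fintype β]

open scoped Classical in
theorem decomp_cyc (hG : G.Connected) (B : β → Blk G) (hB : IsDecomp B) :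
    ∑ w, (G.degree w : ℝ) = 2 * (Fintype.card V - 1) +
      2 * ((Finset.univ.filter (fun b => (B b).k ≠ 2)).card : ℝ) := by
  have h1 : ∀ w z, (if G.Adj w z then (1:ℝ) else 0) =
      ∑ b, if G.Adj w z ∧ (B b).pr w ≠ (B b).pr z then (1:ℝ) else 0 := by
    intro w z
    split_ifs with h
    · obtain ⟨b, hb, hu⟩ := hB w z h
      rw [Finset.sum_eq_single b]
      · simp [h, hb]
      · intro b' _ hb'
        rw [if_neg]
        rintro ⟨_, h2⟩
        exact hb' (hu b' h2)
      · simp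
    · simp [h]
  simp_rw [degree_sum, h1]
  have h2 : ∀ w, ∑ z, ∑ b, (if G.Adj w z ∧ (B b).pr w ≠ (B b).pr z then (1:ℝ) else 0)
     = ∑ b, ∑ z, (if G.Adj w z ∧ (B b).pr w ≠ (B b).pr z then (1:ℝ) else 0) :=
    fun w => Finset.sum_comm
  rw [Finset.sum_congr rfl (fun w _ => h2 w), Finset.sum_comm]
  rw [Finset.sum_congr rfl (fun b _ => (B b).sum_cross_tot)]
  rw [← decomp_count hG B hB, Finset.mul_sum, Finset.card_eq_sum_ones, Finset.sum_filter]
  push_cast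
  rw [Finset.mul_sum, ← Finset.sum_add_distrib]
  apply Finset.sum_congr rfl
  intro b _
  by_cases h : (B b).k = 2
  · simp [gam, h]; norm_num
  · simp [gam, h]; ring

theorem sum_s_val (hG : G.Connected) (B : β → Blk G) (hB : IsDecomp B) (n t : ℕ)
    (hn : Fintype.card V = n) (ht : (Finset.univ.filter (fun b => (B b).k ≠ 2)).card = t) (b : β) :
    ∑ i, (B b).s i = if (B b).k = 2 then (t:ℝ) else t - 1 := by
  classical
  have h1 := (B b).sum_s
  rw [(B b).sum_D] at h1
  have h0 := decomp_cyc hG B hB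
  have h2 : ((∑ i, (B b).a i : ℕ) : ℝ) = n - (B b).k := by
    rw [eq_sub_iff_add_eq]; rw [← hn, ← (B b).sum_a]; push_cast; ring
  rw [h2] at h1
  rw [h1, hn, ht] at h0
  split_ifs with h
  · simp only [gam, h, if_true] at h0
    push_cast at h0
    linarith
  · simp only [gam, h, if_false] at h0
    linarith

theorem degRes_formula (hG : G.Connected) (B : β → Blk G) (hB : IsDecomp B) (n t : ℕ)
    (hn : Fintype.card V = n) (ht : (Finset.univ.filter (fun b => (B b).k ≠ 2)).card = t) :
    degRes G = t * ((8/3) * (2 * n + t - 4)) + ((n:ℝ) - 1 - 2 * t) * (3 * n - 4 + 2 * t)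
      + ∑ b, (B b).exc n t := by
  classical
  have hsymm : ∀ u v, effRes G u v = effRes G v u := by
    intro u v
    rw [effRes_decomp hG B hB, effRes_decomp hG B hB]
    apply Finset.sum_congr rfl; intro b _; exact rr_symm _ _ _
  have h1 : degRes G = ∑ u, ∑ v, (G.degree u : ℝ) * effRes G u v := by
    have h2 : ∑ u, ∑ v, (G.degree v : ℝ) * effRes G u v = ∑ u, ∑ v, (G.degree u : ℝ) * effRes G u v := by
      rw [Finset.sum_comm]
      apply Finset.sum_congr rfl; intro u _
      apply Finset.sum_congr rfl; intro v _
      rw [hsymm]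
    have h3 : degRes G = (1/2) * ∑ u, ∑ v, ((G.degree u : ℝ) + G.degree v) * effRes G u v := by
      unfold degRes
      congr!
    rw [h3]
    simp only [add_mul, Finset.sum_add_distrib]
    rw [h2]; ring
  have h2 : degRes G = ∑ b, (B b).val := by
    rw [h1]
    simp_rw [effRes_decomp hG B hB, Finset.mul_sum]
    rw [Finset.sum_congr rfl (fun u _ => Finset.sum_comm), Finset.sum_comm]
    apply Finset.sum_congr rfl; intro b _
    rw [← (B b).val_eq]
  have h3 : ∀ b, (B b).val = (B b).exc n t + (((B b).k : ℝ) - 1) * (3 * n - 4 + 2 * t) +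
      (if (B b).k ≠ 2 then (1:ℝ) else 0) * ((8/3) * (2 * n + t - 4) - 2 * (3 * n - 4 + 2 * t)) := by
    intro b
    have e1 := (B b).val_formula
    have e2 : ((∑ i, (B b).a i : ℕ) : ℝ) = n - (B b).k := by
      rw [eq_sub_iff_add_eq]; rw [← hn, ← (B b).sum_a]; push_cast; ring
    rw [e2, sum_s_val hG B hB n t hn ht b] at e1
    rw [e1]
    unfold Blk.exc baseExc
    by_cases h : (B b).k = 2
    · simp [h, gam]; ring
    · simp [h, gam]; ring
  rw [h2, Finset.sum_congr rfl (fun b _ => h3 b), Finset.sum_add_distrib, Finset.sum_add_distrib,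
    ← Finset.sum_mul, ← Finset.sum_mul, decomp_count hG B hB, hn]
  have h4 : (∑ b, if (B b).k ≠ 2 then (1:ℝ) else 0) = t := by
    rw [← ht, Finset.card_eq_sum_ones, Finset.sum_filter]; push_cast; rfl
  rw [h4]; ring

end

def Blk.Star {V : Type*} {G : SimpleGraph V} [Fintype V] (B : Blk G) : Prop :=
  ∃ i, ∀ j, j ≠ i → B.a j = 0

def Blk.Tee {V : Type*} {G : SimpleGraph V} [Fintype V] (B : Blk G) : Prop :=
  B.k = 3 ∧ ∃ j l, j ≠ l ∧ B.a j = 1 ∧ B.a l = 0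

theorem nonstar_bound {k : ℕ} (hk : 2 ≤ k) (a : Fin k → ℕ) (h : ∀ i, ∃ j, j ≠ i ∧ a j ≠ 0) :
    2 * ((∑ i, (a i : ℝ)) - 1) ≤ ∑ i, (a i : ℝ) * ((∑ j, (a j : ℝ)) - a i) := by
  obtain ⟨j, _, hj⟩ := h ⟨0, by omega⟩
  obtain ⟨l, hlj, hl⟩ := h j
  set A : ℝ := ∑ i, (a i : ℝ) with hA
  have hle : ∀ i, (a i : ℝ) + 1 ≤ A := by
    intro i
    obtain ⟨m, hm, hm0⟩ := h i
    have h1 : (a i : ℝ) + a m ≤ A := by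
      rw [← Finset.sum_pair (f := fun i => (a i : ℝ)) hm.symm]
      exact Finset.sum_le_sum_of_subset_of_nonneg (by simp) (fun _ _ _ => by positivity)
    have : (1:ℝ) ≤ a m := by exact_mod_cast Nat.one_le_iff_ne_zero.mpr hm0
    linarith
  have hterm : ∀ i, 0 ≤ (a i : ℝ) * (A - a i) := fun i =>
    mul_nonneg (by positivity) (by linarith [hle i])
  have hbig : ∀ i, a i ≠ 0 → A - 1 ≤ (a i : ℝ) * (A - a i) := by
    intro i hi
    have : (1:ℝ) ≤ a i := by exact_mod_cast Nat.one_le_iff_ne_zero.mpr hi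
    nlinarith [hle i]
  have h1 : (a j : ℝ) * (A - a j) + (a l : ℝ) * (A - a l) ≤ ∑ i, (a i : ℝ) * (A - a i) := by
    rw [← Finset.sum_pair (f := fun i => (a i : ℝ) * (A - a i)) hlj.symm]
    exact Finset.sum_le_sum_of_subset_of_nonneg (by simp) (fun i _ _ => hterm i)
  linarith [hbig j hj, hbig l hl]

theorem Q_bound {k : ℕ} (a : Fin k → ℕ) (s : Fin k → ℝ) (hs : ∀ i, 0 ≤ s i)
    (h : ∀ i, ∃ j, j ≠ i ∧ a j ≠ 0) (μ : ℝ) (hμ0 : 0 ≤ μ)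
    (hμ : ∀ i j, i ≠ j → μ ≤ rr k i j) :
    μ * (2 * (∑ i, (a i : ℝ) * ((∑ j, (a j : ℝ)) - a i)) + 2 * ∑ i, s i) ≤
     ∑ i, ∑ j, (2 * (a i : ℝ) * a j + 2 * s i * a j) * rr k i j := by
  have h1 : ∀ i, μ * (2 * (a i : ℝ) * ((∑ j, (a j : ℝ)) - a i) + 2 * s i) ≤
      ∑ j, (2 * (a i : ℝ) * a j + 2 * s i * a j) * rr k i j := by
    intro i
    obtain ⟨m, hm, hm0⟩ := h i
    have h2 : ∑ j ∈ Finset.univ.erase i, (2 * (a i : ℝ) * a j + 2 * s i * a j) * μ ≤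
        ∑ j, (2 * (a i : ℝ) * a j + 2 * s i * a j) * rr k i j := by
      rw [← Finset.add_sum_erase _ _ (Finset.mem_univ i), rr_self, mul_zero, zero_add]
      apply Finset.sum_le_sum
      intro j hj
      apply mul_le_mul_of_nonneg_left (hμ i j (Finset.ne_of_mem_erase hj).symm)
      have := hs i
      positivity
    have h3 : ∑ j ∈ Finset.univ.erase i, (a j : ℝ) = (∑ j, (a j : ℝ)) - a i := by
      rw [← Finset.add_sum_erase _ _ (Finset.mem_univ i)]; ring
    have h4 : (1:ℝ) ≤ (∑ j, (a j : ℝ)) - a i := by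
      rw [← h3]
      have : (1:ℝ) ≤ a m := by exact_mod_cast Nat.one_le_iff_ne_zero.mpr hm0
      refine this.trans ?_
      exact Finset.single_le_sum (f := fun j => (a j : ℝ)) (fun _ _ => by positivity) (by simp [hm])
    rw [← Finset.sum_mul] at h2
    have h5 : ∑ j ∈ Finset.univ.erase i, (2 * (a i : ℝ) * a j + 2 * s i * a j) =
        (2 * (a i : ℝ) + 2 * s i) * ((∑ j, (a j : ℝ)) - a i) := by
      rw [← h3, Finset.mul_sum]; apply Finset.sum_congr rfl; intros; ring
    rw [h5] at h2
    refine le_trans ?_ h2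
    have := mul_nonneg (mul_nonneg hμ0 (hs i)) (sub_nonneg.mpr h4)
    nlinarith
  refine le_trans (le_of_eq ?_) (Finset.sum_le_sum (fun i _ => h1 i))
  rw [← Finset.mul_sum, Finset.sum_add_distrib, ← Finset.mul_sum]
  congr 3
  rw [Finset.mul_sum]
  apply Finset.sum_congr rfl; intros; ring

section
variable {V : Type*} {G : SimpleGraph V} [Fintype V]

theorem Blk.Q_nonneg (B : Blk G) (hG : G.Connected) : 0 ≤ B.Q := by
  unfold Blk.Q
  apply Finset.sum_nonneg; intro i _
  apply Finset.sum_nonneg; intro j _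
  have := B.s_nonneg hG i
  have := rr_nonneg B.k i j
  positivity

theorem baseExc_five (k : ℕ) (n t : ℝ) (hk : 5 ≤ k) (hn : 25 ≤ n) (hkn : (k:ℝ) ≤ n) (ht : 1 ≤ t) :
    (8 * n - 36 + 4 * t) / 3 < baseExc k n t := by
  have h2 : k ≠ 2 := by omega
  simp only [baseExc, h2, if_false]
  by_cases h8 : k < 8
  · interval_cases k <;> norm_num <;> linarith
  · have h8' : (8:ℝ) ≤ k := by exact_mod_cast (not_lt.mp h8)
    have e1 : 0 ≤ (2 * (k:ℝ)^2 - 9 * k + 1) * (n - k) := by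
      apply mul_nonneg <;> nlinarith
    have e2 : 0 ≤ ((k:ℝ)^2 - 6 * k + 5) * (t - 1) := by
      apply mul_nonneg <;> nlinarith
    have e3 : 0 < (k:ℝ)^3 - 9 * k^2 + 8 * k + 38 := by
      nlinarith [mul_nonneg (sub_nonneg.mpr h8') (sub_nonneg.mpr h8'), mul_nonneg (mul_nonneg (sub_nonneg.mpr h8') (sub_nonneg.mpr h8')) (sub_nonneg.mpr h8')]
    nlinarith

theorem blk_class (hG : G.Connected) (B : Blk G) (n t : ℕ) (hn : 25 ≤ n) (ht : 1 ≤ t)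
    (hcard : Fintype.card V = n)
    (hs : ∑ i, B.s i = if B.k = 2 then (t:ℝ) else t - 1) :
    0 ≤ B.exc n t ∧
    ((B.Star ∧ B.k ≤ 3) ∨ (B.Star ∧ B.k = 4 ∧ (5 * (n:ℝ) - 31 + t) / 3 ≤ B.exc n t) ∨
     (B.Tee ∧ (8 * (n:ℝ) - 36 + 4 * t) / 3 ≤ B.exc n t) ∨
     (8 * (n:ℝ) - 36 + 4 * t) / 3 < B.exc n t) := by
  have hQ := B.Q_nonneg hG
  have hk := B.hk
  have hsum := B.sum_a
  rw [hcard] at hsum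
  have hn' : (25:ℝ) ≤ n := by exact_mod_cast hn
  have ht' : (1:ℝ) ≤ t := by exact_mod_cast ht
  by_cases h5 : 5 ≤ B.k
  · have := baseExc_five B.k n t h5 hn' (by exact_mod_cast (by omega : B.k ≤ n)) ht'
    unfold Blk.exc
    exact ⟨by linarith, by right; right; right; linarith⟩
  have hcases : B.k = 2 ∨ B.k = 3 ∨ B.k = 4 := by omega
  have hbase : (B.k = 4 → baseExc B.k n t = (5 * (n:ℝ) - 31 + t) / 3) ∧ (B.k ≤ 3 → baseExc B.k n t = 0) := by
    constructor
    · intro h; rw [h]; simp [baseExc]; ring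
    · intro h
      rcases hcases with h | h | h
      · rw [h]; simp [baseExc]
      · rw [h]; simp [baseExc]; ring
      · omega
  have hexc0 : 0 ≤ B.exc n t := by
    unfold Blk.exc
    rcases hcases with h | h | h
    · rw [hbase.2 (by omega)]; linarith
    · rw [hbase.2 (by omega)]; linarith
    · rw [hbase.1 h]; linarith
  refine ⟨hexc0, ?_⟩
  by_cases hst : B.Star
  · rcases hcases with h | h | h
    · left; exact ⟨hst, by omega⟩
    · left; exact ⟨hst, by omega⟩
    · right; left
      refine ⟨hst, h, ?_⟩
      unfold Blk.exc; rw [hbase.1 h]; linarith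
  right; right
  have hns : ∀ i, ∃ j, j ≠ i ∧ B.a j ≠ 0 := by
    intro i
    by_contra hcon
    push Not at hcon
    exact hst ⟨i, hcon⟩
  have hb1 := nonstar_bound B.hk B.a hns
  have hA : (∑ i, (B.a i : ℝ)) = n - B.k := by
    rw [eq_sub_iff_add_eq, ← hsum]; push_cast; ring
  obtain ⟨k, hk2, c, pr, hpr, hadj, hcross⟩ := B
  dsimp only at *
  set B : Blk G := ⟨k, hk2, c, pr, hpr, hadj, hcross⟩ with hBdef
  have hBk : B.k = k := rfl
  have hs0 := B.s_nonneg hG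
  unfold Blk.exc
  rcases hcases with h | h | h
  · right
    subst h
    rw [hbase.2 (by omega)]
    have := Q_bound B.a B.s hs0 hns 1 (by norm_num) (fun i j hij => (rr_two i j hij).ge)
    change _ ≤ B.Q at this
    rw [hA] at hb1 this
    simp only [if_true] at hs
    rw [hs] at this
    push_cast at *
    linarith
  · subst h
    rw [hbase.2 (by omega)]
    have := Q_bound B.a B.s hs0 hns (2/3) (by norm_num) (fun i j hij => (rr_three i j hij).ge)
    change _ ≤ B.Q at this
    norm_num at hs
    by_cases hT : B.Tee
    · left
      refine ⟨hT, ?_⟩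
      rw [hA] at hb1 this
      rw [hs] at this
      push_cast at *
      linarith
    · right
      have hT' : ∀ j l : Fin 3, j ≠ l → B.a j = 1 → B.a l ≠ 0 := by
        intro j l hjl h1 h0
        exact hT ⟨rfl, j, l, hjl, h1, h0⟩
      have key : (∑ i, (B.a i : ℝ)) ≤ (1/2) * (∑ i, (B.a i : ℝ) * ((∑ j, (B.a j : ℝ)) - B.a i)) := by
        have hf : ∀ f : Fin B.k → ℝ, ∑ i, f i = f (0 : Fin 3) + f (1 : Fin 3) + f (2 : Fin 3) := fun f => Fin.sum_univ_three f
        simp only [hf]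
        have n0 := hns (0 : Fin 3)
        have n1 := hns (1 : Fin 3)
        have n2 := hns (2 : Fin 3)
        have t01 := hT' 0 1 (by decide)
        have t10 := hT' 1 0 (by decide)
        have t02 := hT' 0 2 (by decide)
        have t20 := hT' 2 0 (by decide)
        have t12 := hT' 1 2 (by decide)
        have t21 := hT' 2 1 (by decide)
        have hex : ∀ P : Fin B.k → Prop, (∃ j, P j) → P (0 : Fin 3) ∨ P (1 : Fin 3) ∨ P (2 : Fin 3) := by
          rintro P ⟨j, hj⟩
          have : ∀ j : Fin 3, j = 0 ∨ j = 1 ∨ j = 2 := by decide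
          rcases this j with h | h | h <;> (subst h; simp [hj])
        have n0 := hex _ n0
        have n1 := hex _ n1
        have n2 := hex _ n2
        generalize B.a (0 : Fin 3) = x at *
        generalize B.a (1 : Fin 3) = y at *
        generalize B.a (2 : Fin 3) = z at *
        have d01 : ¬ ((0 : Fin 3) = 1) := by decide
        have m0 : y ≠ 0 ∨ z ≠ 0 := by
          rcases n0 with h | h | h
          · exact absurd rfl h.1
          · exact Or.inl h.2
          · exact Or.inr h.2
        have m1 : x ≠ 0 ∨ z ≠ 0 := by
          rcases n1 with h | h | h
          · exact Or.inl h.2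
          · exact absurd rfl h.1
          · exact Or.inr h.2
        have m2 : x ≠ 0 ∨ y ≠ 0 := by
          rcases n2 with h | h | h
          · exact Or.inl h.2
          · exact Or.inr h.2
          · exact absurd rfl h.1
        have aux : ∀ p q : ℕ, 2 ≤ p → 2 ≤ q → p + q ≤ p * q := by
          intro p q hp hq; nlinarith
        have goal : x + y + z ≤ x * y + y * z + x * z := by
          by_cases hx : x = 0
          · subst hx; simp; apply aux <;> omega
          by_cases hy : y = 0
          · subst hy; simp; apply aux <;> omega
          by_cases hz : z = 0
          · subst hz; simp; apply aux <;> omega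
          have : 1 ≤ x := by omega
          have : 1 ≤ y := by omega
          have : 1 ≤ z := by omega
          nlinarith
        have goal' : (x:ℝ) + y + z ≤ x * y + y * z + x * z := by exact_mod_cast goal
        nlinarith
      rw [hA] at key this
      rw [hs] at this
      push_cast at *
      linarith
  · right
    subst h
    rw [hbase.1 rfl]
    have := Q_bound B.a B.s hs0 hns (3/4) (by norm_num) (fun i j hij => rr_four i j hij)
    change _ ≤ B.Q at this
    norm_num at hs
    rw [hA] at hb1 this
    rw [hs] at this
    push_cast at *
    linarith
end

open Finset

theorem cycAdj_iff {k : ℕ} (hk : 2 ≤ k) (i j : Fin k) : (SimpleGraph.cycleGraph k).Adj i j ↔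
    (i.val + 1 = j.val ∨ j.val + 1 = i.val ∨ (i.val = 0 ∧ j.val + 1 = k) ∨
      (j.val = 0 ∧ i.val + 1 = k)) := by
  rw [SimpleGraph.cycleGraph_adj']
  have hi := i.isLt
  have hj := j.isLt
  rcases lt_trichotomy i j with h | h | h
  · have h1 := Fin.coe_sub_iff_lt.mpr h
    have h2 := Fin.coe_sub_iff_le.mpr h.le
    have h3 : i.val < j.val := h
    omega
  · subst h
    have h2 := Fin.coe_sub_iff_le.mpr (le_refl i)
    omega
  · have h1 := Fin.coe_sub_iff_lt.mpr h
    have h2 := Fin.coe_sub_iff_le.mpr h.le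
    have h3 : j.val < i.val := h
    omega

section
variable {V : Type*} {G : SimpleGraph V}

theorem exists_blk (hG : G.Connected) (k : ℕ) (hk : 2 ≤ k) (c : Fin k → V)
    (hadj : ∀ i j, (SimpleGraph.cycleGraph k).Adj i j → G.Adj (c i) (c j))
    (EB : Set (Sym2 V))
    (hEB : ∀ e, e ∈ EB ↔ ∃ i j, (SimpleGraph.cycleGraph k).Adj i j ∧ e = s(c i, c j))
    (sep : ∀ i j, (G.deleteEdges EB).Reachable (c i) (c j) → i = j) :
    ∃ B : Blk G, B.k = k ∧ ∀ w z, G.Adj w z → (B.pr w ≠ B.pr z ↔ s(w, z) ∈ EB) := by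
  have hex : ∀ w, ∃ i, (G.deleteEdges EB).Reachable w (c i) := by
    intro w
    have aux : ∀ u w : V, ∀ p : G.Walk w u, (∃ i, (G.deleteEdges EB).Reachable u (c i)) →
        ∃ i, (G.deleteEdges EB).Reachable w (c i) := by
      intro u w p
      induction p with
      | nil => exact id
      | @cons a b d h p ih =>
        intro hu
        obtain ⟨i, hi⟩ := ih hu
        by_cases he : s(a, b) ∈ EB
        · obtain ⟨i, j, hij, he⟩ := (hEB _).mp he
          rw [Sym2.eq_iff] at he
          rcases he with ⟨rfl, rfl⟩ | ⟨rfl, rfl⟩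
          · exact ⟨i, SimpleGraph.Reachable.refl _⟩
          · exact ⟨j, SimpleGraph.Reachable.refl _⟩
        · have : (G.deleteEdges EB).Adj a b := by
            rw [SimpleGraph.deleteEdges_adj]; exact ⟨h, he⟩
          exact ⟨i, this.reachable.trans hi⟩
    obtain ⟨p⟩ := hG.preconnected w (c ⟨0, by omega⟩)
    exact aux _ _ p ⟨_, SimpleGraph.Reachable.refl _⟩
  choose pr hpr using hex
  have key : ∀ w i, (G.deleteEdges EB).Reachable w (c i) → pr w = i := fun w i h =>
    sep _ _ ((hpr w).symm.trans h)
  have hpc : ∀ i, pr (c i) = i := fun i => key _ _ (SimpleGraph.Reachable.refl _)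
  have hsame : ∀ w z, G.Adj w z → pr w ≠ pr z → s(w, z) ∈ EB := by
    intro w z h hne
    by_contra hc
    apply hne
    apply key
    have : (G.deleteEdges EB).Adj w z := by
      rw [SimpleGraph.deleteEdges_adj]; exact ⟨h, hc⟩
    exact this.reachable.trans (hpr z)
  have hcr : ∀ w z, s(w, z) ∈ EB → w = c (pr w) ∧ z = c (pr z) ∧
      (SimpleGraph.cycleGraph k).Adj (pr w) (pr z) := by
    intro w z h
    obtain ⟨i, j, hij, he⟩ := (hEB _).mp h
    rw [Sym2.eq_iff] at he
    rcases he with ⟨rfl, rfl⟩ | ⟨rfl, rfl⟩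
    · simp [hpc, hij]
    · simp [hpc, hij.symm]
  refine ⟨⟨k, hk, c, pr, hpc, hadj, fun w z h hne => hcr w z (hsame w z h hne)⟩, rfl, ?_⟩
  intro w z h
  exact ⟨hsame w z h, fun h' => (hcr w z h').2.2.ne⟩

theorem cyc_sub {v : V} (p : G.Walk v v) (hp : p.IsCycle) : IsCycleSubgraph p.toSubgraph := by
  refine ⟨p.toSubgraph_connected.coe, ?_⟩
  intro w hw
  rw [SimpleGraph.Walk.mem_verts_toSubgraph] at hw
  exact hp.ncard_neighborSet_toSubgraph_eq_two hw

theorem cyc_walk [Finite V] (H : G.Subgraph) (hH : IsCycleSubgraph H) :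
    ∃ (v : V) (p : G.Walk v v), p.IsCycle ∧ p.toSubgraph = H := by
  classical
  have := Fintype.ofFinite V
  obtain ⟨hc, h2⟩ := hH
  have hcyc : H.spanningCoe.IsCycles := by
    intro w ⟨u, hu⟩
    exact h2 w (H.edge_vert hu)
  obtain ⟨v, hv⟩ := hc.nonempty
  have hne : (H.spanningCoe.neighborSet v).Nonempty := by
    apply Set.nonempty_of_ncard_ne_zero
    have := h2 v hv
    change {u | H.Adj v u}.ncard ≠ 0
    omega
  obtain ⟨p, hp, hpv⟩ := hcyc.exists_cycle_toSubgraph_verts_eq_connectedComponentSupp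
    (c := H.spanningCoe.connectedComponentMk v) (by simp) hne
  have hverts : p.toSubgraph.verts = H.verts := by
    apply Set.Subset.antisymm
    · intro w hw
      have := hp.ncard_neighborSet_toSubgraph_eq_two (p.mem_verts_toSubgraph.mp hw)
      obtain ⟨u, hu⟩ := Set.nonempty_of_ncard_ne_zero (s := p.toSubgraph.neighborSet w) (by omega)
      have h3 : H.Adj w u := p.toSubgraph.adj_sub hu
      exact H.edge_vert h3
    · intro w hw
      rw [hpv, SimpleGraph.ConnectedComponent.mem_supp_iff, SimpleGraph.ConnectedComponent.eq]
      have h3 := hc.preconnected ⟨w, hw⟩ ⟨v, hv⟩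
      exact h3.map ⟨Subtype.val, fun h => h⟩
  refine ⟨v, p.map (SimpleGraph.Hom.ofLE H.spanningCoe_le), ?_, ?_⟩
  · exact (SimpleGraph.Walk.map_isCycle_iff_of_injective (fun _ _ h => h)).mpr hp
  · ext w u
    · simp [← hverts]
    · rw [SimpleGraph.Walk.toSubgraph_map]
      have := hp.adj_toSubgraph_iff_of_isCycles hcyc (v := w)
      simp only [SimpleGraph.Subgraph.map_adj, Relation.map_apply]
      constructor
      · rintro ⟨a, b, hab, rfl, rfl⟩
        exact p.toSubgraph.adj_sub hab
      · intro h
        exact ⟨w, u, (this (by rw [hverts]; exact H.edge_vert h) u).mpr h, rfl, rfl⟩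

theorem cactus_cyc [Finite V] (hG : IsCactus G) {H₁ H₂ : G.Subgraph} (h₁ : IsCycleSubgraph H₁)
    (h₂ : IsCycleSubgraph H₂) {a b : V} (hab : a ≠ b) (ha1 : a ∈ H₁.verts) (hb1 : b ∈ H₁.verts)
    (ha2 : a ∈ H₂.verts) (hb2 : b ∈ H₂.verts) : H₁ = H₂ := by
  by_contra hne
  have := hG.2 H₁ H₂ h₁ h₂ hne
  rw [Set.ncard_le_one (Set.toFinite _)] at this
  exact hab (this a ⟨ha1, ha2⟩ b ⟨hb1, hb2⟩)

theorem cyc_sep [Finite V] (hG : IsCactus G) {v : V} (p : G.Walk v v) (hp : p.IsCycle) {a b : V}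
    (f : Sym2 V) (he : s(a, b) ∈ p.edges) (hf : f ∈ p.edges) (hne : f ≠ s(a, b)) :
    ¬ (G.deleteEdges {s(a, b), f}).Reachable a b := by
  classical
  intro h
  obtain ⟨q, hq⟩ := h.symm.exists_isPath
  have hle : G.deleteEdges {s(a, b), f} ≤ G := SimpleGraph.deleteEdges_le _
  have hed : ∀ e ∈ q.edges, e ≠ s(a, b) ∧ e ≠ f := by
    intro e heq
    have := q.edges_subset_edgeSet heq
    rw [SimpleGraph.edgeSet_deleteEdges] at this
    have := this.2
    simp at this
    exact this
  set q' := q.map (SimpleGraph.Hom.ofLE hle) with hq'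
  have hed' : q'.edges = q.edges := by simp [hq']
  have hq'p : q'.IsPath := (SimpleGraph.Walk.map_isPath_iff_of_injective (fun _ _ h => h)).mpr hq
  have hab : G.Adj a b := p.adj_of_mem_edges he
  have hcyc : (SimpleGraph.Walk.cons hab q').IsCycle := by
    rw [SimpleGraph.Walk.cons_isCycle_iff]
    refine ⟨hq'p, ?_⟩
    rw [hed']
    intro h
    exact (hed _ h).1 rfl
  have heq := cactus_cyc hG (cyc_sub _ hcyc) (cyc_sub _ hp) hab.ne (by simp) (by simp)
    (by rw [SimpleGraph.Walk.mem_verts_toSubgraph]; exact p.fst_mem_support_of_mem_edges he)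
    (by rw [SimpleGraph.Walk.mem_verts_toSubgraph]; exact p.snd_mem_support_of_mem_edges he)
  have hf2 : f ∈ (SimpleGraph.Walk.cons hab q').edges := by
    rw [← SimpleGraph.Walk.mem_edges_toSubgraph, heq, SimpleGraph.Walk.mem_edges_toSubgraph]
    exact hf
  rw [SimpleGraph.Walk.edges_cons, List.mem_cons, hed'] at hf2
  rcases hf2 with h | h
  · exact hne h
  · exact (hed _ h).2 rfl

theorem cyc_edge_inj {v : V} (p : G.Walk v v) (hp : p.IsCycle) {i j : ℕ} (hi : i < p.length)
    (hj : j < p.length) (h : s(p.getVert i, p.getVert (i + 1)) = s(p.getVert j, p.getVert (j + 1))) :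
    i = j := by
  have hi' : i < p.edges.length := by simpa using hi
  have hj' : j < p.edges.length := by simpa using hj
  rw [← SimpleGraph.Walk.getElem_edges hi', ← SimpleGraph.Walk.getElem_edges hj'] at h
  exact (List.Nodup.getElem_inj_iff hp.isTrail.edges_nodup).mp h

theorem cyc_mem_edges {v : V} (p : G.Walk v v) {i : ℕ} (hi : i < p.length) :
    s(p.getVert i, p.getVert (i + 1)) ∈ p.edges := by
  have hi' : i < p.edges.length := by simpa using hi
  rw [← SimpleGraph.Walk.getElem_edges hi']
  exact List.getElem_mem _

theorem cyc_sep' [Finite V] (hG : IsCactus G) {v : V} (p : G.Walk v v) (hp : p.IsCycle) {i j : ℕ}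
    (hij : i < j) (hj : j < p.length) :
    ¬ (G.deleteEdges {e | e ∈ p.edges}).Reachable (p.getVert i) (p.getVert j) := by
  intro h
  refine cyc_sep hG p hp (s(p.getVert j, p.getVert (j + 1))) (cyc_mem_edges p (hij.trans hj))
    (cyc_mem_edges p hj) (fun he => by have := cyc_edge_inj p hp hj (hij.trans hj) he; omega) ?_
  have h1 : (G.deleteEdges {s(p.getVert i, p.getVert (i + 1)),
      s(p.getVert j, p.getVert (j + 1))}).Reachable (p.getVert i) (p.getVert j) := by
    refine h.mono (SimpleGraph.deleteEdges_anti ?_)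
    intro e he
    simp only [Set.mem_insert_iff, Set.mem_singleton_iff] at he
    rcases he with rfl | rfl
    · exact cyc_mem_edges p (hij.trans hj)
    · exact cyc_mem_edges p hj
  refine h1.trans (SimpleGraph.Reachable.symm ?_)
  have : ∀ m, i + 1 ≤ m → m ≤ j → (G.deleteEdges {s(p.getVert i, p.getVert (i + 1)),
      s(p.getVert j, p.getVert (j + 1))}).Reachable (p.getVert (i + 1)) (p.getVert m) := by
    intro m hm
    induction m, hm using Nat.le_induction with
    | base => intro _; exact SimpleGraph.Reachable.refl _
    | succ m hm ih =>
      intro hmj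
      refine (ih (by omega)).trans (SimpleGraph.Adj.reachable ?_)
      rw [SimpleGraph.deleteEdges_adj]
      refine ⟨p.adj_getVert_succ (by omega), ?_⟩
      simp only [Set.mem_insert_iff, Set.mem_singleton_iff]
      rintro (h | h)
      · have := cyc_edge_inj p hp (by omega) (by omega) h; omega
      · have := cyc_edge_inj p hp (by omega) (by omega) h; omega
  exact this j (by omega) le_rfl

theorem blk_of_cycle [Finite V] (hG : IsCactus G) (H : G.Subgraph) (hH : IsCycleSubgraph H) :
    ∃ B : Blk G, B.k ≠ 2 ∧ ∀ w z, G.Adj w z → (B.pr w ≠ B.pr z ↔ s(w, z) ∈ H.edgeSet) := by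
  obtain ⟨v, p, hp, rfl⟩ := cyc_walk H hH
  have h3 := hp.three_le_length
  have hlen : p.getVert p.length = p.getVert 0 := by simp
  refine (exists_blk hG.1 p.length (by omega) (fun i => p.getVert i.val) ?_
    {e | e ∈ p.edges} ?_ ?_).elim ?_
  rotate_left 3
  · rintro B ⟨hB, hB2⟩
    refine ⟨B, by omega, ?_⟩
    intro w z h
    rw [hB2 w z h, SimpleGraph.Walk.mem_edges_toSubgraph]
    rfl
  · intro i j hij
    have hi := i.isLt
    have hj := j.isLt
    rw [cycAdj_iff (by omega)] at hij
    rcases hij with h | h | ⟨h, h'⟩ | ⟨h, h'⟩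
    · have := p.adj_getVert_succ hi
      rwa [h] at this
    · have := p.adj_getVert_succ hj
      rw [h] at this
      exact this.symm
    · have := p.adj_getVert_succ hj
      rw [h', hlen] at this
      change G.Adj (p.getVert i.val) _
      rw [h]; exact this.symm
    · have := p.adj_getVert_succ hi
      rw [h', hlen] at this
      change G.Adj _ (p.getVert j.val)
      rw [h]; exact this
  · intro e
    induction e with | h a b
    rw [Set.mem_setOf_eq, SimpleGraph.Walk.mk_mem_edges_iff_exists]
    constructor
    · rintro ⟨i, hi, he⟩
      rw [← he]
      by_cases hi2 : i + 1 = p.length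
      · refine ⟨⟨i, hi⟩, ⟨0, by omega⟩, ?_, ?_⟩
        · rw [cycAdj_iff (by omega)]; simp; omega
        · rw [hi2, hlen]
      · refine ⟨⟨i, hi⟩, ⟨i + 1, by omega⟩, ?_, rfl⟩
        rw [cycAdj_iff (by omega)]; simp
    · rintro ⟨i, j, hij, he⟩
      have hi := i.isLt
      have hj := j.isLt
      rw [he]
      rw [cycAdj_iff (by omega)] at hij
      rcases hij with h | h | ⟨h, h'⟩ | ⟨h, h'⟩
      · exact ⟨i, hi, by rw [h]⟩
      · exact ⟨j, hj, by rw [h, Sym2.eq_swap]⟩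
      · exact ⟨j, hj, by rw [h', hlen, h, Sym2.eq_swap]⟩
      · exact ⟨i, hi, by rw [h', hlen, h]⟩
  · intro i j h
    rcases lt_trichotomy i j with hij | hij | hij
    · exact absurd h (cyc_sep' hG p hp hij j.isLt)
    · exact hij
    · exact absurd h.symm (cyc_sep' hG p hp hij i.isLt)

theorem blk_of_bridge (hG : G.Connected) (e : Sym2 V) (he : e ∈ G.edgeSet) (hb : G.IsBridge e) :
    ∃ B : Blk G, B.k = 2 ∧ ∀ w z, G.Adj w z → (B.pr w ≠ B.pr z ↔ s(w, z) = e) := by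
  induction e with | h a b
  rw [SimpleGraph.isBridge_iff] at hb
  have hab : G.Adj a b := he
  refine (exists_blk hG 2 le_rfl ![a, b] ?_ {s(a, b)} ?_ ?_).elim ?_
  rotate_left 3
  · rintro B ⟨hB, hB2⟩
    exact ⟨B, hB, hB2⟩
  · intro i j hij
    fin_cases i <;> fin_cases j <;> simp_all [hab.symm]
  · intro e
    constructor
    · intro h
      exact ⟨0, 1, by decide, by simpa using h⟩
    · rintro ⟨i, j, hij, rfl⟩
      fin_cases i <;> fin_cases j <;> simp_all
  · intro i j h
    fin_cases i <;> fin_cases j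
    · rfl
    · exact absurd h hb
    · exact absurd h.symm hb
    · rfl

end

theorem exists_decomp.{u} {V : Type u} [Finite V] {G : SimpleGraph V} (hG : IsCactus G) :
    ∃ (β : Type u) (_ : Fintype β) (B : β → Blk G), IsDecomp B ∧
      (univ.filter (fun b => (B b).k ≠ 2)).card = numCycles G := by
  classical
  have i1 : Finite (G.Subgraph) := inferInstance
  have i2 : Finite (Sym2 V) := inferInstance
  choose! Bc hc1 hc2 using fun (H : {H : G.Subgraph // IsCycleSubgraph H}) =>
    blk_of_cycle hG H.1 H.2
  choose! Bb hb1 hb2 using fun (e : {e : Sym2 V // e ∈ G.edgeSet ∧ G.IsBridge e}) =>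
    blk_of_bridge hG.1 e.1 e.2.1 e.2.2
  letI := Fintype.ofFinite {H : G.Subgraph // IsCycleSubgraph H}
  letI := Fintype.ofFinite {e : Sym2 V // e ∈ G.edgeSet ∧ G.IsBridge e}
  refine ⟨{H : G.Subgraph // IsCycleSubgraph H} ⊕ {e : Sym2 V // e ∈ G.edgeSet ∧ G.IsBridge e},
    inferInstance, Sum.elim Bc Bb, ?_, ?_⟩
  · intro w z hwz
    by_cases hbr : G.IsBridge s(w, z)
    · refine ⟨Sum.inr ⟨s(w, z), hwz, hbr⟩, (hb2 _ w z hwz).mpr rfl, ?_⟩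
      rintro (⟨H, hH⟩ | ⟨e, he⟩) h
      · exfalso
        have h' := (hc2 _ w z hwz).mp h
        obtain ⟨v, p, hp, rfl⟩ := cyc_walk H hH
        exact hbr.notMem_edges_of_isCycle hp (p.mem_edges_toSubgraph.mp h')
      · have h' := (hb2 _ w z hwz).mp h
        simp only at h'
        subst h'
        rfl
    · have h1 := hbr
      rw [SimpleGraph.isBridge_iff_forall_cycle_notMem hwz] at h1
      push Not at h1
      obtain ⟨v, p, hp, hpe⟩ := h1
      refine ⟨Sum.inl ⟨p.toSubgraph, cyc_sub p hp⟩, (hc2 _ w z hwz).mpr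
        (p.mem_edges_toSubgraph.mpr hpe), ?_⟩
      rintro (⟨H, hH⟩ | ⟨e, he⟩) h
      · have h' : H.Adj w z := (hc2 _ w z hwz).mp h
        congr 2
        exact cactus_cyc hG hH (cyc_sub p hp) hwz.ne (H.edge_vert h') (H.edge_vert h'.symm)
          (by rw [SimpleGraph.Walk.mem_verts_toSubgraph]; exact p.fst_mem_support_of_mem_edges hpe)
          (by rw [SimpleGraph.Walk.mem_verts_toSubgraph]; exact p.snd_mem_support_of_mem_edges hpe)
      · exfalso
        have h' := (hb2 _ w z hwz).mp h
        simp only at h'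
        subst h'
        exact hbr he.2
  · unfold numCycles
    have : (univ.filter (fun b => (Sum.elim Bc Bb b).k ≠ 2)) =
        (univ : Finset {H : G.Subgraph // IsCycleSubgraph H}).map Function.Embedding.inl := by
      ext b
      rcases b with H | e
      · simp [hc1]
      · simp [hb1]
    rw [this, Finset.card_map, Finset.card_univ, ← Nat.card_eq_fintype_card]
    rfl

open Finset

theorem cyc_has_nb {k : ℕ} (hk : 2 ≤ k) (i : Fin k) : ∃ j, (SimpleGraph.cycleGraph k).Adj i j := by
  have hi := i.isLt
  by_cases h : i.val + 1 = k
  · exact ⟨⟨0, by omega⟩, by rw [cycAdj_iff hk]; simp; omega⟩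
  · exact ⟨⟨i.val + 1, by omega⟩, by rw [cycAdj_iff hk]; simp⟩

section
variable {V β : Type*} {G : SimpleGraph V}

/-- fiber over `j` is a single vertex -/
def Blk.Sing (B : Blk G) (j : Fin B.k) : Prop := ∀ w, B.pr w = j → w = B.c j

theorem Blk.sing_of_a [Fintype V] (B : Blk G) (j : Fin B.k) (h : B.a j = 0) : B.Sing j := by
  intro w hw
  have h1 := B.fib_card j
  rw [h] at h1
  obtain ⟨x, hx⟩ := Finset.card_eq_one.mp h1
  have h2 : w ∈ B.fib j := (B.mem_fib j w).mpr hw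
  have h3 : B.c j ∈ B.fib j := (B.mem_fib j _).mpr (B.hpr j)
  rw [hx, Finset.mem_singleton] at h2 h3
  rw [h2, h3]

theorem Blk.sing_cross (B : Blk G) {j : Fin B.k} (h : B.Sing j) {v : V} (hv : G.Adj (B.c j) v) :
    B.pr (B.c j) ≠ B.pr v := by
  rw [B.hpr]
  intro he
  have := h v he.symm
  rw [this] at hv
  exact hv.ne rfl

theorem Blk.sing_nb (B : Blk G) {j : Fin B.k} (h : B.Sing j) (v : V) :
    G.Adj (B.c j) v ↔ ∃ l, (SimpleGraph.cycleGraph B.k).Adj j l ∧ v = B.c l := by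
  constructor
  · intro hv
    obtain ⟨h1, h2, h3⟩ := B.cross _ _ hv (B.sing_cross h hv)
    rw [B.hpr] at h3
    exact ⟨_, h3, h2⟩
  · rintro ⟨l, hl, rfl⟩
    exact B.adj _ _ hl

theorem Blk.adj_cross (B : Blk G) {i j : Fin B.k} (h : (SimpleGraph.cycleGraph B.k).Adj i j) :
    B.pr (B.c i) ≠ B.pr (B.c j) := by
  rw [B.hpr, B.hpr]; exact h.ne

/-- all edges at a vertex with single fiber in `b` cross `b`; a core vertex of `b0` has an edge
crossing `b0`. -/
theorem sing_not_core {B : β → Blk G} (hB : IsDecomp B) {b b0 : β} (hne : b ≠ b0)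
    {j : Fin (B b).k} (hj : (B b).Sing j) (i : Fin (B b0).k) : (B b).c j ≠ (B b0).c i := by
  intro he
  obtain ⟨l, hl⟩ := cyc_has_nb (B b0).hk i
  have hadj := (B b0).adj _ _ hl
  have h1 := (B b0).adj_cross hl
  have h2 : (B b).pr ((B b0).c i) ≠ (B b).pr ((B b0).c l) := by
    have := (B b).sing_cross hj (v := (B b0).c l) (by rw [he]; exact hadj)
    rwa [he] at this
  exact hne ((hB _ _ hadj).unique h2 h1)

theorem hub (hG : G.Connected) {B : β → Blk G} (hB : IsDecomp B) (ctr : ∀ b, Fin (B b).k)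
    (b0 : β) (i0 : Fin (B b0).k) (P : Set V)
    (hcore : ∀ w, (w ∈ Set.range (B b0).c ∨ w ∈ P) → w ≠ (B b0).c i0 → ∀ v, G.Adj w v →
      (v ∈ Set.range (B b0).c ∨ v ∈ P))
    (hs : ∀ b, b ≠ b0 → ∀ j, j ≠ ctr b → (B b).Sing j) :
    (∀ w, (w ∈ Set.range (B b0).c ∨ w ∈ P) ∨ ∃ b, b ≠ b0 ∧ (B b).c (ctr b) = (B b0).c i0 ∧
      ∃ j, j ≠ ctr b ∧ w = (B b).c j) ∧
    (∀ b, b ≠ b0 → (B b).c (ctr b) = (B b0).c i0 ∨ ∀ j, j ≠ ctr b → (B b).c j ∈ P) := by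
  have h1 : ∀ w, (w ∈ Set.range (B b0).c ∨ w ∈ P) ∨ ∃ b, b ≠ b0 ∧
      (B b).c (ctr b) = (B b0).c i0 ∧ ∃ j, j ≠ ctr b ∧ w = (B b).c j := by
    have step : ∀ w v, G.Adj w v → ((w ∈ Set.range (B b0).c ∨ w ∈ P) ∨ ∃ b, b ≠ b0 ∧
      (B b).c (ctr b) = (B b0).c i0 ∧ ∃ j, j ≠ ctr b ∧ w = (B b).c j) →
      ((v ∈ Set.range (B b0).c ∨ v ∈ P) ∨ ∃ b, b ≠ b0 ∧
      (B b).c (ctr b) = (B b0).c i0 ∧ ∃ j, j ≠ ctr b ∧ v = (B b).c j) := by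
      intro w v hwv hw
      rcases hw with hw | ⟨b, hb, hz, j, hj, rfl⟩
      · by_cases hwz : w = (B b0).c i0
        · obtain ⟨b, hb, -⟩ := hB w v hwv
          obtain ⟨c1, c2, c3⟩ := (B b).cross _ _ hwv hb
          by_cases hbb : b = b0
          · subst hbb
            exact Or.inl (Or.inl ⟨_, c2.symm⟩)
          · right
            have hc : (B b).pr w = ctr b := by
              by_contra hc
              exact sing_not_core hB hbb (hs b hbb _ hc) i0 (by rw [← c1, hwz])
            refine ⟨b, hbb, ?_, _, ?_, c2⟩
            · rw [← hc, ← c1, hwz]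
            · rw [← hc]; exact hb.symm
        · exact Or.inl (hcore w hw hwz v hwv)
      · obtain ⟨l, hl, rfl⟩ := ((B b).sing_nb (hs b hb j hj) v).mp hwv
        by_cases hlc : l = ctr b
        · exact Or.inl (Or.inl ⟨i0, by rw [hlc, hz]⟩)
        · exact Or.inr ⟨b, hb, hz, l, hlc, rfl⟩
    intro w
    obtain ⟨p⟩ := hG.preconnected ((B b0).c i0) w
    have : ∀ a v : V, ∀ p : G.Walk a v, ((a ∈ Set.range (B b0).c ∨ a ∈ P) ∨ ∃ b, b ≠ b0 ∧
      (B b).c (ctr b) = (B b0).c i0 ∧ ∃ j, j ≠ ctr b ∧ a = (B b).c j) →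
      ((v ∈ Set.range (B b0).c ∨ v ∈ P) ∨ ∃ b, b ≠ b0 ∧
      (B b).c (ctr b) = (B b0).c i0 ∧ ∃ j, j ≠ ctr b ∧ v = (B b).c j) := by
      intro a v p
      induction p with
      | nil => exact id
      | cons h p ih => exact fun ha => ih (step _ _ h ha)
    exact this _ _ p (Or.inl (Or.inl ⟨_, rfl⟩))
  refine ⟨h1, ?_⟩
  intro b hb
  by_contra hcon
  push Not at hcon
  obtain ⟨hcz, j, hj, hjP⟩ := hcon
  rcases h1 ((B b).c j) with (⟨i, hi⟩ | h) | ⟨b', hb', hz', j', hj', he⟩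
  · exact sing_not_core hB hb (hs b hb j hj) i hi.symm
  · exact hjP h
  · by_cases hbb : b = b'
    · subst hbb; exact hcz hz'
    · exact sing_not_core hB hbb (hs b hb j hj) j' he

theorem fin3_third {k : ℕ} (hk : k = 3) (i : Fin k) : ∃ j l : Fin k, j ≠ i ∧ l ≠ i ∧ j ≠ l ∧
    (∀ m, m = i ∨ m = j ∨ m = l) := by
  subst hk
  revert i; decide

theorem cyc3_adj {k : ℕ} (hk : k = 3) (i j : Fin k) :
    (SimpleGraph.cycleGraph k).Adj i j ↔ i ≠ j := by
  subst hk
  revert i j; decide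

theorem cyc2_adj {k : ℕ} (hk : k = 2) (i j : Fin k) :
    (SimpleGraph.cycleGraph k).Adj i j ↔ i ≠ j := by
  subst hk
  revert i j; decide

theorem hub_tri (hG : G.Connected) [Fintype β] {B : β → Blk G} (hB : IsDecomp B) (t : ℕ)
    (ht : (univ.filter (fun b => (B b).k ≠ 2)).card = t) (ctr : ∀ b, Fin (B b).k)
    (b0 : β) (hb0 : (B b0).k ≠ 2) (i0 : Fin (B b0).k) (P : Set V) (hP : ∀ x ∈ P, ∀ y ∈ P, x = y)
    (hcore : ∀ w, (w ∈ Set.range (B b0).c ∨ w ∈ P) → w ≠ (B b0).c i0 → ∀ v, G.Adj w v →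
      (v ∈ Set.range (B b0).c ∨ v ∈ P))
    (hs : ∀ b, b ≠ b0 → ∀ j, j ≠ ctr b → (B b).Sing j)
    (hk3 : ∀ b, b ≠ b0 → (B b).k ≤ 3) :
    ∃ x y : ℕ → V,
      (∀ m, m < t - 1 → ∀ v, G.Adj (x m) v ↔ v = (B b0).c i0 ∨ v = y m) ∧
      (∀ m, m < t - 1 → ∀ v, G.Adj (y m) v ↔ v = (B b0).c i0 ∨ v = x m) ∧
      (∀ m m', m < t - 1 → m' < t - 1 → x m = x m' → m = m') ∧
      (∀ m m', m < t - 1 → m' < t - 1 → y m = y m' → m = m') ∧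
      (∀ m m', m < t - 1 → m' < t - 1 → x m ≠ y m') ∧
      (∀ m, m < t - 1 → x m ∉ Set.range (B b0).c ∧ x m ∉ P) ∧
      (∀ m, m < t - 1 → y m ∉ Set.range (B b0).c ∧ y m ∉ P) ∧
      (∀ u, u ∉ Set.range (B b0).c → u ∉ P → (∀ m, m < t - 1 → u ≠ x m ∧ u ≠ y m) →
        ∀ v, G.Adj u v ↔ v = (B b0).c i0) := by
  classical
  obtain ⟨h1, h2⟩ := hub hG hB ctr b0 i0 P hcore hs
  set Tr := (univ.filter (fun b => (B b).k ≠ 2)).erase b0 with hTr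
  have hcard : Tr.card = t - 1 := by
    rw [hTr, Finset.card_erase_of_mem (by simp [hb0]), ht]
  have hmem : ∀ b ∈ Tr, b ≠ b0 ∧ (B b).k ≠ 2 := by
    intro b hb
    simpa [hTr] using hb
  have e := (Tr.equivFinOfCardEq hcard).symm
  have hTm : ∀ m, (e m : β) ≠ b0 ∧ (B (e m)).k = 3 := by
    intro m
    have := hmem _ (e m).2
    have h3 := hk3 _ this.1
    have h4 := (B (e m)).hk
    exact ⟨this.1, by have := this.2; omega⟩
  choose J L hJ hL hJL hall using fun m => fin3_third (hTm m).2 (ctr (e m))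
  have hz : ∀ m, (B (e m)).c (ctr (e m)) = (B b0).c i0 := by
    intro m
    rcases h2 _ (hTm m).1 with h | h
    · exact h
    · exact absurd ((B (e m)).c_inj (hP _ (h _ (hJ m)) _ (h _ (hL m)))) (hJL m)
  have hV : Nonempty V := hG.nonempty
  have hdis : ∀ b b' : β, b ≠ b0 → ∀ j : Fin (B b).k, ∀ j' : Fin (B b').k,
      j ≠ ctr b → (B b).c j = (B b').c j' → b = b' := by
    intro b b' hb j j' hj he
    by_contra hbb
    exact sing_not_core hB hbb (hs b hb j hj) j' he
  have hnP : ∀ m, ∀ j, j ≠ ctr (e m) → (B (e m)).c j ∉ P := by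
    intro m j hj hjP
    by_cases hr : (B (e m)).c j = (B b0).c i0
    · exact sing_not_core hB (hTm m).1 (hs _ (hTm m).1 j hj) i0 hr
    obtain ⟨l, hlc, hlj⟩ : ∃ l, l ≠ ctr (e m) ∧ l ≠ j := by
      rcases hall m j with h | h | h
      · exact absurd h hj
      · exact ⟨L m, hL m, by rw [h]; exact (hJL m).symm⟩
      · exact ⟨J m, hJ m, by rw [h]; exact hJL m⟩
    have hadj : G.Adj ((B (e m)).c j) ((B (e m)).c l) :=
      (B (e m)).adj _ _ ((cyc3_adj (hTm m).2 _ _).mpr hlj.symm)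
    rcases hcore _ (Or.inr hjP) hr _ hadj with ⟨i, hi⟩ | h
    · exact sing_not_core hB (hTm m).1 (hs _ (hTm m).1 l hlc) i hi.symm
    · exact hlj ((B (e m)).c_inj (hP _ h _ hjP))
  set x : ℕ → V := fun m => if h : m < t - 1 then (B (e ⟨m, h⟩)).c (J ⟨m, h⟩)
    else Classical.arbitrary V with hx
  set y : ℕ → V := fun m => if h : m < t - 1 then (B (e ⟨m, h⟩)).c (L ⟨m, h⟩)
    else Classical.arbitrary V with hy
  have hx' : ∀ m (h : m < t - 1), x m = (B (e ⟨m, h⟩)).c (J ⟨m, h⟩) := fun m h => by simp [hx, h]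
  have hy' : ∀ m (h : m < t - 1), y m = (B (e ⟨m, h⟩)).c (L ⟨m, h⟩) := fun m h => by simp [hy, h]
  have einj : ∀ m m' (h : m < t - 1) (h' : m' < t - 1), (e ⟨m, h⟩ : β) = e ⟨m', h'⟩ → m = m' := by
    intro m m' h h' he
    simpa using e.injective (Subtype.ext he)
  refine ⟨x, y, ?_, ?_, ?_, ?_, ?_, ?_, ?_, ?_⟩
  · intro m hm v
    rw [hx' m hm, hy' m hm, (B _).sing_nb (hs _ (hTm _).1 _ (hJ _)), ← hz ⟨m, hm⟩]
    constructor
    · rintro ⟨l, hl, rfl⟩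
      rw [cyc3_adj (hTm _).2] at hl
      rcases hall _ l with h | h | h
      · left; rw [h]
      · exact absurd h.symm hl
      · right; rw [h]
    · rintro (rfl | rfl)
      · exact ⟨_, (cyc3_adj (hTm _).2 _ _).mpr (hJ _), rfl⟩
      · exact ⟨_, (cyc3_adj (hTm _).2 _ _).mpr (hJL _), rfl⟩
  · intro m hm v
    rw [hx' m hm, hy' m hm, (B _).sing_nb (hs _ (hTm _).1 _ (hL _)), ← hz ⟨m, hm⟩]
    constructor
    · rintro ⟨l, hl, rfl⟩
      rw [cyc3_adj (hTm _).2] at hl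
      rcases hall _ l with h | h | h
      · left; rw [h]
      · right; rw [h]
      · exact absurd h.symm hl
    · rintro (rfl | rfl)
      · exact ⟨_, (cyc3_adj (hTm _).2 _ _).mpr (hL _), rfl⟩
      · exact ⟨_, (cyc3_adj (hTm _).2 _ _).mpr (hJL _).symm, rfl⟩
  · intro m m' hm hm' he
    rw [hx' m hm, hx' m' hm'] at he
    exact einj _ _ _ _ (hdis _ _ (hTm _).1 _ _ (hJ _) he)
  · intro m m' hm hm' he
    rw [hy' m hm, hy' m' hm'] at he
    exact einj _ _ _ _ (hdis _ _ (hTm _).1 _ _ (hL _) he)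
  · intro m m' hm hm' he
    have he' := he
    rw [hx' m hm, hy' m' hm'] at he
    have := einj _ _ _ _ (hdis _ _ (hTm _).1 _ _ (hJ _) he)
    subst this
    exact hJL _ ((B _).c_inj he)
  · intro m hm
    rw [hx' m hm]
    refine ⟨?_, hnP _ _ (hJ _)⟩
    rintro ⟨i, hi⟩
    exact sing_not_core hB (hTm _).1 (hs _ (hTm _).1 _ (hJ _)) i hi.symm
  · intro m hm
    rw [hy' m hm]
    refine ⟨?_, hnP _ _ (hL _)⟩
    rintro ⟨i, hi⟩
    exact sing_not_core hB (hTm _).1 (hs _ (hTm _).1 _ (hL _)) i hi.symm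
  · intro u hu1 hu2 hu3 v
    rcases h1 u with (h | h) | ⟨b, hb, hbz, j, hj, rfl⟩
    · exact absurd h hu1
    · exact absurd h hu2
    · by_cases hk2 : (B b).k = 2
      · rw [(B b).sing_nb (hs b hb j hj)]
        constructor
        · rintro ⟨l, hl, rfl⟩
          rw [cyc2_adj hk2] at hl
          rw [← hbz]
          congr 1
          have := l.isLt
          have := j.isLt
          have := (ctr b).isLt
          rw [Ne, Fin.ext_iff] at hl hj
          ext
          omega
        · rintro rfl
          exact ⟨_, (cyc2_adj hk2 _ _).mpr hj, hbz.symm⟩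
      · exfalso
        have hbT : b ∈ Tr := by simp [hTr, hb, hk2]
        obtain ⟨⟨m, hm⟩, hme⟩ := e.surjective ⟨b, hbT⟩
        have hme' : (e ⟨m, hm⟩ : β) = b := by rw [hme]
        subst hme'
        obtain ⟨a1, a2⟩ := hu3 m hm
        rw [hx' m hm] at a1
        rw [hy' m hm] at a2
        rcases hall _ j with h | h | h
        · exact hj h
        · exact a1 (by rw [h])
        · exact a2 (by rw [h])

end

open Finset

def FXY {V : Type*} (z : V) (X Y : ℕ → V) (a : ℕ) : V :=
  if a = 0 then z else if a % 2 = 1 then X (a / 2) else Y (a / 2 - 1)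

section
variable {V : Type*} {z : V} {X Y : ℕ → V}

@[simp] theorem FXY_zero : FXY z X Y 0 = z := by simp [FXY]
@[simp] theorem FXY_odd (m : ℕ) : FXY z X Y (2 * m + 1) = X m := by
  have h1 : (2 * m + 1) % 2 = 1 := by omega
  have h2 : (2 * m + 1) / 2 = m := by omega
  simp [FXY, h2]
@[simp] theorem FXY_even (m : ℕ) : FXY z X Y (2 * m + 2) = Y m := by
  have h1 : (2 * m + 2) % 2 ≠ 1 := by omega
  have h2 : (2 * m + 2) / 2 - 1 = m := by omega
  simp [FXY, h2]

theorem nat_cases3 (a : ℕ) : a = 0 ∨ (∃ m, a = 2 * m + 1) ∨ (∃ m, a = 2 * m + 2) := by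
  rcases Nat.even_or_odd' a with ⟨m, h | h⟩
  · by_cases hm : m = 0
    · left; omega
    · right; right; exact ⟨m - 1, by omega⟩
  · right; left; exact ⟨m, h⟩

theorem iso_of_XY [Fintype V] {G : SimpleGraph V} {n : ℕ} (hn : Fintype.card V = n)
    (Γ : SimpleGraph (Fin n)) (M : ℕ) (hM : 0 < M)
    (hX : ∀ m m', 2 * m + 1 < M → 2 * m' + 1 < M → X m = X m' → m = m')
    (hY : ∀ m m', 2 * m + 2 < M → 2 * m' + 2 < M → Y m = Y m' → m = m')
    (hXY : ∀ m m', 2 * m + 1 < M → 2 * m' + 2 < M → X m ≠ Y m')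
    (hXz : ∀ m, 2 * m + 1 < M → X m ≠ z)
    (hYz : ∀ m, 2 * m + 2 < M → Y m ≠ z)
    (hr : ∀ u, u ≠ z → (∀ m, 2 * m + 1 < M → u ≠ X m) → (∀ m, 2 * m + 2 < M → u ≠ Y m) →
      ∀ v, G.Adj u v ↔ v = z)
    (hnbX : M ≤ n → ∀ m, 2 * m + 1 < M → ∃ L : List ℕ, (∀ b ∈ L, b < M) ∧
      (∀ v, G.Adj (X m) v ↔ ∃ b ∈ L, v = FXY z X Y b) ∧
      (∀ a b : Fin n, a.val = 2 * m + 1 → (Γ.Adj a b ↔ b.val ∈ L)))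
    (hnbY : M ≤ n → ∀ m, 2 * m + 2 < M → ∃ L : List ℕ, (∀ b ∈ L, b < M) ∧
      (∀ v, G.Adj (Y m) v ↔ ∃ b ∈ L, v = FXY z X Y b) ∧
      (∀ a b : Fin n, a.val = 2 * m + 2 → (Γ.Adj a b ↔ b.val ∈ L)))
    (hΓ : M ≤ n → ∀ a b : Fin n, M ≤ a.val → (Γ.Adj a b ↔ b.val = 0)) :
    Nonempty (G ≃g Γ) := by
  classical
  set F := FXY z X Y with hF
  have hinj : ∀ a b, a < M → b < M → F a = F b → a = b := by
    intro a b ha hb h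
    rcases nat_cases3 a with rfl | ⟨m, rfl⟩ | ⟨m, rfl⟩ <;>
    rcases nat_cases3 b with rfl | ⟨m', rfl⟩ | ⟨m', rfl⟩ <;>
    simp only [hF, FXY_zero, FXY_odd, FXY_even] at h
    · rfl
    · exact absurd h.symm (hXz _ hb)
    · exact absurd h.symm (hYz _ hb)
    · exact absurd h (hXz _ ha)
    · rw [hX _ _ ha hb h]
    · exact absurd h (hXY _ _ ha hb)
    · exact absurd h (hYz _ ha)
    · exact absurd h.symm (hXY _ _ hb ha)
    · rw [hY _ _ ha hb h]
  have hMn : M ≤ n := by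
    rw [← hn]
    have := Fintype.card_le_of_injective (fun a : Fin M => F a.val)
      (fun a b h => Fin.ext (hinj _ _ a.isLt b.isLt h))
    simpa using this
  obtain ⟨φ, hφ⟩ := Set.MapsTo.exists_equiv_extend_of_card_eq (α := Fin n) (β := V)
    (t := (Finset.univ : Finset V)) (by simp [hn]) (s := {a : Fin n | a.val < M})
    (f := fun a => F a.val) (fun _ _ => by simp) (fun a ha b hb h => Fin.ext (hinj _ _ ha hb h))
  set ψ : Fin n → V := fun a => (φ a : V) with hψ
  have hψi : Function.Injective ψ := fun a b h => φ.injective (Subtype.ext h)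
  have hψF : ∀ a : Fin n, a.val < M → ψ a = F a.val := fun a ha => hφ a ha
  have hn0 : 0 < n := by omega
  have hψ0 : ψ ⟨0, hn0⟩ = z := by rw [hψF _ hM]; simp [hF]
  have hmain : ∀ a b : Fin n, a.val ≠ 0 → (Γ.Adj a b ↔ G.Adj (ψ a) (ψ b)) := by
    intro a b ha0
    by_cases haM : a.val < M
    · have : ∃ L : List ℕ, (∀ b ∈ L, b < M) ∧
          (∀ v, G.Adj (F a.val) v ↔ ∃ b ∈ L, v = F b) ∧ (Γ.Adj a b ↔ b.val ∈ L) := by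
        rcases nat_cases3 a.val with h | ⟨m, h⟩ | ⟨m, h⟩
        · exact absurd h ha0
        · obtain ⟨L, h1, h2, h3⟩ := hnbX hMn m (by omega)
          refine ⟨L, h1, ?_, h3 a b h⟩
          rw [h, hF, FXY_odd]; exact h2
        · obtain ⟨L, h1, h2, h3⟩ := hnbY hMn m (by omega)
          refine ⟨L, h1, ?_, h3 a b h⟩
          rw [h, hF, FXY_even]; exact h2
      obtain ⟨L, h1, h2, h3⟩ := this
      rw [h3, hψF a haM, h2]
      constructor
      · intro hb
        exact ⟨_, hb, hψF b (h1 _ hb)⟩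
      · rintro ⟨b', hb', he⟩
        have hb'M := h1 _ hb'
        have : b = ⟨b', by omega⟩ := hψi (by rw [he, hψF _ hb'M])
        rw [this]; exact hb'
    · have hne : ∀ c, c < M → ψ a ≠ F c := by
        intro c hc he
        have : a = ⟨c, by omega⟩ := hψi (by rw [he, hψF _ hc])
        rw [this] at haM
        exact haM hc
      rw [hΓ hMn a b (by omega), hr (ψ a)]
      · rw [← hψ0]
        constructor
        · intro h; congr 1; exact Fin.ext h
        · intro h; have := hψi h; rw [this]
      · have := hne 0 hM; simpa [hF] using this
      · intro m hm; have := hne _ hm; simpa [hF] using this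
      · intro m hm; have := hne _ hm; simpa [hF] using this
  have hsurj : Function.Surjective ψ := by
    intro v
    obtain ⟨a, ha⟩ := φ.surjective ⟨v, by simp⟩
    exact ⟨a, by simp [hψ, ha]⟩
  suffices h : ∀ a b, G.Adj (ψ a) (ψ b) ↔ Γ.Adj a b by
    exact ⟨(⟨Equiv.ofBijective ψ ⟨hψi, hsurj⟩, fun {a b} => h a b⟩ : Γ ≃g G).symm⟩
  intro a b
  by_cases ha : a.val = 0
  · by_cases hb : b.val = 0
    · have : a = b := Fin.ext (ha.trans hb.symm)
      subst this; simp
    · rw [G.adj_comm, Γ.adj_comm, hmain b a hb]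
  · rw [hmain a b ha]

end

open Finset

theorem G0_adj {n t : ℕ} (a b : Fin n) : (G0 n t).Adj a b ↔ a.val ≠ b.val ∧
    ((a.val = 0 ∨ (a.val % 2 = 1 ∧ b.val = a.val + 1 ∧ b.val ≤ 2 * t)) ∨
    (b.val = 0 ∨ (b.val % 2 = 1 ∧ a.val = b.val + 1 ∧ a.val ≤ 2 * t))) := by
  simp only [G0, SimpleGraph.fromRel_adj, Nat.odd_iff, ne_eq, Fin.ext_iff]

theorem G4_adj {n t : ℕ} (a b : Fin n) : (G4g n t).Adj a b ↔ a.val ≠ b.val ∧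
    (((a.val = 0 ∧ b.val ≠ 2 * t + 1) ∨ (a.val % 2 = 1 ∧ b.val = a.val + 1 ∧ b.val ≤ 2 * t) ∨
      (a.val = 1 ∧ b.val = 2 * t + 1)) ∨
    ((b.val = 0 ∧ a.val ≠ 2 * t + 1) ∨ (b.val % 2 = 1 ∧ a.val = b.val + 1 ∧ a.val ≤ 2 * t) ∨
      (b.val = 1 ∧ a.val = 2 * t + 1))) := by
  simp only [G4g, SimpleGraph.fromRel_adj, Nat.odd_iff, ne_eq, Fin.ext_iff]

theorem G5_adj {n t : ℕ} (a b : Fin n) : (G5g n t).Adj a b ↔ a.val ≠ b.val ∧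
    (((a.val = 0 ∧ b.val ≠ 2 * t) ∨ (a.val % 2 = 1 ∧ b.val = a.val + 1 ∧ b.val ≤ 2 * t - 2) ∨
      (a.val = 2 * t - 1 ∧ b.val = 2 * t) ∨ (a.val = 2 * t ∧ b.val = 2 * t + 1)) ∨
    ((b.val = 0 ∧ a.val ≠ 2 * t) ∨ (b.val % 2 = 1 ∧ a.val = b.val + 1 ∧ a.val ≤ 2 * t - 2) ∨
      (b.val = 2 * t - 1 ∧ a.val = 2 * t) ∨ (b.val = 2 * t ∧ a.val = 2 * t + 1))) := by
  simp only [G5g, SimpleGraph.fromRel_adj, Nat.odd_iff, ne_eq, Fin.ext_iff]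

section
variable {V β : Type*} {G : SimpleGraph V} [Fintype V] [Fintype β]

theorem iso_G0 (hG : G.Connected) {B : β → Blk G} (hB : IsDecomp B) (n t : ℕ)
    (hn : Fintype.card V = n) (ht1 : 1 ≤ t)
    (ht : (univ.filter (fun b => (B b).k ≠ 2)).card = t) (ctr : ∀ b, Fin (B b).k)
    (hs : ∀ b, ∀ j, j ≠ ctr b → (B b).Sing j) (hk3 : ∀ b, (B b).k ≤ 3) :
    Nonempty (G ≃g G0 n t) := by
  classical
  obtain ⟨b0, hb0⟩ : (univ.filter (fun b => (B b).k ≠ 2)).Nonempty := by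
    rw [← Finset.card_pos]; omega
  have hb0 : (B b0).k ≠ 2 := by simpa using hb0
  have hb3 : (B b0).k = 3 := by have := hk3 b0; have := (B b0).hk; omega
  obtain ⟨j, l, hj, hl, hjl, hall⟩ := fin3_third hb3 (ctr b0)
  obtain ⟨x, y, hx, hy, hxi, hyi, hxy, hxc, hyc, hrest⟩ := hub_tri hG hB t ht ctr b0 hb0 (ctr b0) ∅
    (by simp) (by
      rintro w (⟨i, rfl⟩ | h) hne v hv
      · have hi : i ≠ ctr b0 := fun h => hne (by rw [h])
        obtain ⟨l, _, rfl⟩ := ((B b0).sing_nb (hs b0 i hi) v).mp hv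
        exact Or.inl ⟨_, rfl⟩
      · exact absurd h (by simp)) (fun b _ => hs b) (fun b _ => hk3 b)
  set z := (B b0).c (ctr b0) with hz
  set q := (B b0).c j with hq
  set r := (B b0).c l with hr
  have hqz : q ≠ z := fun h => hj ((B b0).c_inj h)
  have hrz : r ≠ z := fun h => hl ((B b0).c_inj h)
  have hqr : q ≠ r := fun h => hjl ((B b0).c_inj h)
  have hrange : ∀ u, u ∈ Set.range (B b0).c ↔ u = z ∨ u = q ∨ u = r := by
    intro u
    constructor
    · rintro ⟨i, rfl⟩
      rcases hall i with h | h | h <;> simp [h, hz, hq, hr]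
    · rintro (rfl | rfl | rfl) <;> exact ⟨_, rfl⟩
  simp only [hrange, not_or] at hxc hyc hrest
  have hqn : ∀ v, G.Adj q v ↔ v = z ∨ v = r := by
    intro v
    rw [hq, (B b0).sing_nb (hs b0 j hj)]
    constructor
    · rintro ⟨i, hi, rfl⟩
      rw [cyc3_adj hb3] at hi
      rcases hall i with h | h | h
      · left; rw [h]
      · exact absurd h.symm hi
      · right; rw [h]
    · rintro (rfl | rfl)
      · exact ⟨_, (cyc3_adj hb3 _ _).mpr hj, rfl⟩
      · exact ⟨_, (cyc3_adj hb3 _ _).mpr hjl, rfl⟩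
  have hrn : ∀ v, G.Adj r v ↔ v = z ∨ v = q := by
    intro v
    rw [hr, (B b0).sing_nb (hs b0 l hl)]
    constructor
    · rintro ⟨i, hi, rfl⟩
      rw [cyc3_adj hb3] at hi
      rcases hall i with h | h | h
      · left; rw [h]
      · right; rw [h]
      · exact absurd h.symm hi
    · rintro (rfl | rfl)
      · exact ⟨_, (cyc3_adj hb3 _ _).mpr hl, rfl⟩
      · exact ⟨_, (cyc3_adj hb3 _ _).mpr hjl.symm, rfl⟩
  clear_value z q r
  clear hrange hall
  set X : ℕ → V := fun m => if m = 0 then q else x (m - 1) with hX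
  set Y : ℕ → V := fun m => if m = 0 then r else y (m - 1) with hY
  have X0 : X 0 = q := rfl
  have Y0 : Y 0 = r := rfl
  have XS : ∀ m, X (m + 1) = x m := fun m => by simp [hX]
  have YS : ∀ m, Y (m + 1) = y m := fun m => by simp [hY]
  clear_value X Y
  refine iso_of_XY (z := z) (X := X) (Y := Y) hn (G0 n t) (2 * t + 1) (by omega) ?_ ?_ ?_ ?_ ?_ ?_ ?_ ?_ ?_
  · rintro (_ | m) (_ | m') h h' he <;> simp only [X0, XS] at he
    · rfl
    · exact absurd he.symm (hxc m' (by omega)).1.2.1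
    · exact absurd he (hxc m (by omega)).1.2.1
    · rw [hxi m m' (by omega) (by omega) he]
  · rintro (_ | m) (_ | m') h h' he <;> simp only [Y0, YS] at he
    · rfl
    · exact absurd he.symm (hyc m' (by omega)).1.2.2
    · exact absurd he (hyc m (by omega)).1.2.2
    · rw [hyi m m' (by omega) (by omega) he]
  · rintro (_ | m) (_ | m') h h' he <;> simp only [X0, Y0, XS, YS] at he
    · exact hqr he
    · exact (hyc m' (by omega)).1.2.1 he.symm
    · exact (hxc m (by omega)).1.2.2 he
    · exact hxy m m' (by omega) (by omega) he
  · rintro (_ | m) h he <;> simp only [X0, XS] at he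
    · exact hqz he
    · exact (hxc m (by omega)).1.1 he
  · rintro (_ | m) h he <;> simp only [Y0, YS] at he
    · exact hrz he
    · exact (hyc m (by omega)).1.1 he
  · intro u hu1 hu2 hu3
    apply hrest u ⟨hu1, ?_, ?_⟩ (by simp)
    · intro m hm
      have a1 := hu2 (m + 1) (by omega)
      have a2 := hu3 (m + 1) (by omega)
      rw [XS] at a1; rw [YS] at a2
      exact ⟨a1, a2⟩
    · have := hu2 0 (by omega); rwa [X0] at this
    · have := hu3 0 (by omega); rwa [Y0] at this
  · intro hMn m hm
    refine ⟨[0, 2 * m + 2], by simp; omega, ?_, ?_⟩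
    · intro v
      simp only [List.mem_cons, List.not_mem_nil, or_false, exists_eq_or_imp, exists_eq_left,
        FXY_zero, FXY_even]
      rcases m with _ | m
      · rw [X0, Y0, hqn]
      · rw [XS, YS, hx m (by omega)]
    · intro a b ha
      rw [G0_adj]
      simp only [List.mem_cons, List.not_mem_nil, or_false]
      omega
  · intro hMn m hm
    refine ⟨[0, 2 * m + 1], by simp; omega, ?_, ?_⟩
    · intro v
      simp only [List.mem_cons, List.not_mem_nil, or_false, exists_eq_or_imp, exists_eq_left,
        FXY_zero, FXY_odd]
      rcases m with _ | m
      · rw [X0, Y0, hrn]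
      · rw [XS, YS, hy m (by omega)]
    · intro a b ha
      rw [G0_adj]
      simp only [List.mem_cons, List.not_mem_nil, or_false]
      omega
  · intro hMn a b ha
    rw [G0_adj]
    omega

end

open Finset

section
variable {V β : Type*} {G : SimpleGraph V} [Fintype V] [Fintype β]

theorem iso_G4 (hG : G.Connected) {B : β → Blk G} (hB : IsDecomp B) (n t : ℕ)
    (hn : Fintype.card V = n) (ht1 : 1 ≤ t)
    (ht : (univ.filter (fun b => (B b).k ≠ 2)).card = t) (ctr : ∀ b, Fin (B b).k)
    (b0 : β) (hT : (B b0).Tee)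
    (hs : ∀ b, b ≠ b0 → ∀ j, j ≠ ctr b → (B b).Sing j) (hk3 : ∀ b, b ≠ b0 → (B b).k ≤ 3) :
    Nonempty (G ≃g G4g n t) := by
  classical
  obtain ⟨hb3, j, l, hjl, haj, hal⟩ := hT
  have hb0 : (B b0).k ≠ 2 := by omega
  have hsl : (B b0).Sing l := (B b0).sing_of_a l hal
  obtain ⟨i, hj, hl, hall⟩ : ∃ i, j ≠ i ∧ l ≠ i ∧ ∀ m, m = i ∨ m = j ∨ m = l := by
    obtain ⟨u, v, h1, h2, h3, h4⟩ := fin3_third hb3 j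
    rcases h4 l with h | h | h
    · exact absurd h.symm hjl
    · subst h
      exact ⟨v, h2.symm, h3, fun m => by rcases h4 m with h | h | h <;> simp [h]⟩
    · subst h
      exact ⟨u, h1.symm, h3.symm, fun m => by rcases h4 m with h | h | h <;> simp [h]⟩
  obtain ⟨p, hpq, hfib⟩ : ∃ p, p ≠ (B b0).c j ∧ ∀ w, (B b0).pr w = j ↔ w = (B b0).c j ∨ w = p := by
    have h1 := (B b0).fib_card j
    rw [haj] at h1
    obtain ⟨u, v, huv, he⟩ := Finset.card_eq_two.mp h1
    have hm : ∀ w, (B b0).pr w = j ↔ w = u ∨ w = v := by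
      intro w
      rw [← (B b0).mem_fib, he]; simp
    rcases (hm _).mp ((B b0).hpr j) with h | h
    · exact ⟨v, by rw [h]; exact huv.symm, by rw [h]; exact hm⟩
    · exact ⟨u, by rw [h]; exact huv, by rw [h]; intro w; rw [hm, or_comm]⟩
  have hprp : (B b0).pr p = j := (hfib p).mpr (Or.inr rfl)
  have hprange : p ∉ Set.range (B b0).c := by
    rintro ⟨i', rfl⟩
    rw [(B b0).hpr] at hprp
    exact hpq (by rw [hprp])
  have hp1 : ∀ v, G.Adj p v → v = (B b0).c j := by
    intro v hv
    by_cases h : (B b0).pr p = (B b0).pr v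
    · rw [hprp] at h
      rcases (hfib v).mp h.symm with h | h
      · exact h
      · rw [h] at hv; exact absurd rfl hv.ne
    · exact absurd ⟨_, ((B b0).cross _ _ hv h).1.symm⟩ hprange
  have hpn : ∀ v, G.Adj p v ↔ v = (B b0).c j := by
    intro v
    refine ⟨hp1 v, ?_⟩
    rintro rfl
    obtain ⟨w⟩ := hG.preconnected p ((B b0).c j)
    cases w with
    | nil => exact absurd rfl hpq
    | cons h w =>
      have := hp1 _ h
      rwa [this] at h
  have hqn : ∀ v, G.Adj ((B b0).c j) v ↔ v = (B b0).c i ∨ v = (B b0).c l ∨ v = p := by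
    intro v
    constructor
    · intro hv
      by_cases h : (B b0).pr ((B b0).c j) = (B b0).pr v
      · rw [(B b0).hpr] at h
        rcases (hfib v).mp h.symm with h | h
        · rw [h] at hv; exact absurd rfl hv.ne
        · exact Or.inr (Or.inr h)
      · obtain ⟨c1, c2, c3⟩ := (B b0).cross _ _ hv h
        rw [(B b0).hpr] at h
        rcases hall ((B b0).pr v) with h' | h' | h'
        · left; rw [c2, h']
        · exact absurd h'.symm h
        · right; left; rw [c2, h']
    · rintro (rfl | rfl | rfl)
      · exact (B b0).adj _ _ ((cyc3_adj hb3 _ _).mpr hj)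
      · exact (B b0).adj _ _ ((cyc3_adj hb3 _ _).mpr hjl)
      · exact ((hpn _).mpr rfl).symm
  have hrn : ∀ v, G.Adj ((B b0).c l) v ↔ v = (B b0).c i ∨ v = (B b0).c j := by
    intro v
    rw [(B b0).sing_nb hsl]
    constructor
    · rintro ⟨i, hi, rfl⟩
      rw [cyc3_adj hb3] at hi
      rcases hall i with h | h | h
      · left; rw [h]
      · right; rw [h]
      · exact absurd h.symm hi
    · rintro (rfl | rfl)
      · exact ⟨_, (cyc3_adj hb3 _ _).mpr hl, rfl⟩
      · exact ⟨_, (cyc3_adj hb3 _ _).mpr hjl.symm, rfl⟩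
  obtain ⟨x, y, hx, hy, hxi, hyi, hxy, hxc, hyc, hrest⟩ := hub_tri hG hB t ht ctr b0 hb0 i {p}
    (by simp) (by
      rintro w (⟨i', rfl⟩ | h) hne v hv
      · rcases hall i' with h | h | h
        · exact absurd (by rw [h]) hne
        · subst h
          rcases (hqn v).mp hv with h | h | h
          · exact Or.inl ⟨_, h.symm⟩
          · exact Or.inl ⟨_, h.symm⟩
          · exact Or.inr h
        · subst h
          rcases (hrn v).mp hv with h | h
          · exact Or.inl ⟨_, h.symm⟩
          · exact Or.inl ⟨_, h.symm⟩
      · rw [Set.mem_singleton_iff] at h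
        subst h
        exact Or.inl ⟨_, (hp1 v hv).symm⟩) hs hk3
  set z := (B b0).c i with hz
  set q := (B b0).c j with hq
  set r := (B b0).c l with hr
  have hqz : q ≠ z := fun h => hj ((B b0).c_inj h)
  have hrz : r ≠ z := fun h => hl ((B b0).c_inj h)
  have hqr : q ≠ r := fun h => hjl ((B b0).c_inj h)
  have hrange : ∀ u, u ∈ Set.range (B b0).c ↔ u = z ∨ u = q ∨ u = r := by
    intro u
    constructor
    · rintro ⟨i, rfl⟩
      rcases hall i with h | h | h <;> simp [h, hz, hq, hr]
    · rintro (rfl | rfl | rfl) <;> exact ⟨_, rfl⟩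
  simp only [hrange, not_or, Set.mem_singleton_iff] at hxc hyc hrest hprange
  clear_value z q r
  clear hrange hall
  set X : ℕ → V := fun m => if m = 0 then q else if m = t then p else x (m - 1) with hX
  set Y : ℕ → V := fun m => if m = 0 then r else y (m - 1) with hY
  have X0 : X 0 = q := rfl
  have Y0 : Y 0 = r := rfl
  have Xt : X t = p := by simp [hX, show t ≠ 0 by omega]
  have XS : ∀ m, m < t - 1 → X (m + 1) = x m := fun m hm => by
    simp [hX, show m + 1 ≠ t by omega]
  have YS : ∀ m, Y (m + 1) = y m := fun m => by simp [hY]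
  clear_value X Y
  have Xc : ∀ m, 2 * m + 1 < 2 * t + 2 → m = 0 ∨ m = t ∨ ∃ m', m' < t - 1 ∧ m = m' + 1 := by
    intro m hm
    by_cases h0 : m = 0
    · exact Or.inl h0
    by_cases h1 : m = t
    · exact Or.inr (Or.inl h1)
    · exact Or.inr (Or.inr ⟨m - 1, by omega, by omega⟩)
  refine iso_of_XY (z := z) (X := X) (Y := Y) hn (G4g n t) (2 * t + 2) (by omega) ?_ ?_ ?_ ?_ ?_ ?_ ?_ ?_ ?_
  · intro a b h h' he
    rcases Xc a h with rfl | rfl | ⟨m, hm, rfl⟩ <;> rcases Xc b h' with rfl | rfl | ⟨m', hm', rfl⟩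
    · rfl
    · rw [X0, Xt] at he; exact absurd he.symm hprange.2.1
    · rw [X0, XS _ hm'] at he; exact absurd he.symm (hxc m' hm').1.2.1
    · rw [X0, Xt] at he; exact absurd he hprange.2.1
    · rfl
    · rw [Xt, XS _ hm'] at he; exact absurd he.symm (hxc m' hm').2
    · rw [X0, XS _ hm] at he; exact absurd he (hxc m hm).1.2.1
    · rw [Xt, XS _ hm] at he; exact absurd he (hxc m hm).2
    · rw [XS _ hm, XS _ hm'] at he
      rw [hxi m m' (by omega) (by omega) he]
  · rintro (_ | m) (_ | m') h h' he <;> simp only [Y0, YS] at he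
    · rfl
    · exact absurd he.symm (hyc m' (by omega)).1.2.2
    · exact absurd he (hyc m (by omega)).1.2.2
    · rw [hyi m m' (by omega) (by omega) he]
  · rintro a (_ | m') h h' he <;> rcases Xc a h with rfl | rfl | ⟨m, hm, rfl⟩
    · rw [X0, Y0] at he; exact hqr he
    · rw [Xt, Y0] at he; exact hprange.2.2 he
    · rw [XS _ hm, Y0] at he; exact (hxc m hm).1.2.2 he
    · rw [X0, YS] at he; exact (hyc m' (by omega)).1.2.1 he.symm
    · rw [Xt, YS] at he; exact (hyc m' (by omega)).2 he.symm
    · rw [XS _ hm, YS] at he; exact hxy m m' (by omega) (by omega) he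
  · intro a h he
    rcases Xc a h with rfl | rfl | ⟨m, hm, rfl⟩
    · exact hqz (X0 ▸ he)
    · exact hprange.1 (Xt ▸ he)
    · rw [XS _ hm] at he; exact (hxc m hm).1.1 he
  · rintro (_ | m) h he <;> simp only [Y0, YS] at he
    · exact hrz he
    · exact (hyc m (by omega)).1.1 he
  · intro u hu1 hu2 hu3
    apply hrest u ⟨hu1, ?_, ?_⟩ ?_
    · intro m hm
      have a1 := hu2 (m + 1) (by omega)
      have a2 := hu3 (m + 1) (by omega)
      rw [XS m hm] at a1; rw [YS] at a2
      exact ⟨a1, a2⟩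
    · have := hu2 0 (by omega); rwa [X0] at this
    · have := hu3 0 (by omega); rwa [Y0] at this
    · have := hu2 t (by omega); rwa [Xt] at this
  · intro hMn a hm
    rcases Xc a hm with rfl | rfl | ⟨m, hm', rfl⟩
    · refine ⟨[0, 2 * 0 + 2, 2 * t + 1], by simp; omega, ?_, ?_⟩
      · intro v
        simp only [List.mem_cons, List.not_mem_nil, or_false, exists_eq_or_imp, exists_eq_left,
          FXY_zero, FXY_even, FXY_odd]
        rw [X0, Y0, Xt, hqn]
      · intro a b ha
        rw [G4_adj]
        simp only [List.mem_cons, List.not_mem_nil, or_false]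
        omega
    · refine ⟨[2 * 0 + 1], by simp, ?_, ?_⟩
      · intro v
        simp only [List.mem_cons, List.not_mem_nil, or_false, exists_eq_left, FXY_odd]
        rw [X0, Xt, hpn]
      · intro a b ha
        rw [G4_adj]
        simp only [List.mem_cons, List.not_mem_nil, or_false]
        omega
    · refine ⟨[0, 2 * (m + 1) + 2], by simp; omega, ?_, ?_⟩
      · intro v
        simp only [List.mem_cons, List.not_mem_nil, or_false, exists_eq_or_imp, exists_eq_left,
          FXY_zero, FXY_even]
        rw [XS m hm', YS, hx m (by omega)]
      · intro a b ha
        rw [G4_adj]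
        simp only [List.mem_cons, List.not_mem_nil, or_false]
        omega
  · intro hMn m hm
    refine ⟨[0, 2 * m + 1], by simp; omega, ?_, ?_⟩
    · intro v
      simp only [List.mem_cons, List.not_mem_nil, or_false, exists_eq_or_imp, exists_eq_left,
        FXY_zero, FXY_odd]
      rcases m with _ | m
      · rw [X0, Y0, hrn]
      · rw [XS m (by omega), YS, hy m (by omega)]
    · intro a b ha
      rw [G4_adj]
      simp only [List.mem_cons, List.not_mem_nil, or_false]
      omega
  · intro hMn a b ha
    rw [G4_adj]
    omega

theorem fin4_idx {k : ℕ} (hk : k = 4) (i : Fin k) : ∃ j l r : Fin k, j ≠ i ∧ l ≠ i ∧ r ≠ i ∧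
    j ≠ l ∧ j ≠ r ∧ l ≠ r ∧ (∀ m, m = i ∨ m = j ∨ m = l ∨ m = r) ∧
    (∀ m, (SimpleGraph.cycleGraph k).Adj j m ↔ m = i ∨ m = l) ∧
    (∀ m, (SimpleGraph.cycleGraph k).Adj l m ↔ m = j ∨ m = r) ∧
    (∀ m, (SimpleGraph.cycleGraph k).Adj r m ↔ m = i ∨ m = l) := by
  subst hk
  revert i; decide

theorem iso_G5 (hG : G.Connected) {B : β → Blk G} (hB : IsDecomp B) (n t : ℕ)
    (hn : Fintype.card V = n) (ht1 : 1 ≤ t)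
    (ht : (univ.filter (fun b => (B b).k ≠ 2)).card = t) (ctr : ∀ b, Fin (B b).k)
    (b0 : β) (hb4 : (B b0).k = 4)
    (hs : ∀ b, ∀ j, j ≠ ctr b → (B b).Sing j) (hk3 : ∀ b, b ≠ b0 → (B b).k ≤ 3) :
    Nonempty (G ≃g G5g n t) := by
  classical
  have hb0 : (B b0).k ≠ 2 := by omega
  obtain ⟨j, l, r, hj, hl, hr, hjl, hjr, hlr, hall, hnj, hnl, hnr⟩ := fin4_idx hb4 (ctr b0)
  obtain ⟨x, y, hx, hy, hxi, hyi, hxy, hxc, hyc, hrest⟩ := hub_tri hG hB t ht ctr b0 hb0 (ctr b0) ∅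
    (by simp) (by
      rintro w (⟨i, rfl⟩ | h) hne v hv
      · have hi : i ≠ ctr b0 := fun h => hne (by rw [h])
        obtain ⟨l, _, rfl⟩ := ((B b0).sing_nb (hs b0 i hi) v).mp hv
        exact Or.inl ⟨_, rfl⟩
      · exact absurd h (by simp)) (fun b _ => hs b) hk3
  have nb : ∀ j, j ≠ ctr b0 → ∀ u w, (∀ m, (SimpleGraph.cycleGraph (B b0).k).Adj j m ↔ m = u ∨ m = w) →
      ∀ v, G.Adj ((B b0).c j) v ↔ v = (B b0).c u ∨ v = (B b0).c w := by
    intro j hj u w h v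
    rw [(B b0).sing_nb (hs b0 j hj)]
    constructor
    · rintro ⟨i, hi, rfl⟩
      rcases (h i).mp hi with h | h <;> simp [h]
    · rintro (rfl | rfl)
      · exact ⟨_, (h _).mpr (Or.inl rfl), rfl⟩
      · exact ⟨_, (h _).mpr (Or.inr rfl), rfl⟩
  have hj' := nb j hj _ _ hnj
  have hl' := nb l hl _ _ hnl
  have hr' := nb r hr _ _ hnr
  have inj : ∀ u w, u ≠ w → (B b0).c u ≠ (B b0).c w := fun u w h he => h ((B b0).c_inj he)
  have e1 := inj _ _ hj
  have e2 := inj _ _ hl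
  have e3 := inj _ _ hr
  have e4 := inj _ _ hjl
  have e5 := inj _ _ hjr
  have e6 := inj _ _ hlr
  set z := (B b0).c (ctr b0) with hz
  set cj := (B b0).c j with hcj
  set cl := (B b0).c l with hcl
  set cr := (B b0).c r with hcr
  have hrange : ∀ u, u ∈ Set.range (B b0).c ↔ u = z ∨ u = cj ∨ u = cl ∨ u = cr := by
    intro u
    constructor
    · rintro ⟨i, rfl⟩
      rcases hall i with h | h | h | h <;> simp [h, hz, hcj, hcl, hcr]
    · rintro (rfl | rfl | rfl | rfl) <;> exact ⟨_, rfl⟩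
  simp only [hrange, not_or] at hxc hyc hrest
  clear_value z cj cl cr
  clear hrange hall nb inj
  set X : ℕ → V := fun m => if m < t - 1 then x m else if m = t then cr else cj with hX
  set Y : ℕ → V := fun m => if m < t - 1 then y m else cl with hY
  have Xt : X t = cr := by simp [hX]
  have Xp : X (t - 1) = cj := by simp [hX, show t - 1 ≠ t by omega]
  have Yp : Y (t - 1) = cl := by simp [hY]
  have XS : ∀ m, m < t - 1 → X m = x m := fun m hm => by simp [hX, hm]
  have YS : ∀ m, m < t - 1 → Y m = y m := fun m hm => by simp [hY, hm]
  clear_value X Y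
  have Xc : ∀ m, 2 * m + 1 < 2 * t + 2 → m = t - 1 ∨ m = t ∨ m < t - 1 := by omega
  have Yc : ∀ m, 2 * m + 2 < 2 * t + 2 → m = t - 1 ∨ m < t - 1 := by omega
  refine iso_of_XY (z := z) (X := X) (Y := Y) hn (G5g n t) (2 * t + 2) (by omega) ?_ ?_ ?_ ?_ ?_ ?_ ?_ ?_ ?_
  · intro a b h h' he
    rcases Xc a h with ha | ha | ha <;> rcases Xc b h' with hb | hb | hb
    · omega
    · rw [ha, hb, Xp, Xt] at he; exact absurd he e5
    · rw [ha, Xp, XS _ hb] at he; exact absurd he.symm (hxc _ hb).1.2.1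
    · rw [ha, hb, Xp, Xt] at he; exact absurd he.symm e5
    · omega
    · rw [ha, Xt, XS _ hb] at he; exact absurd he.symm (hxc _ hb).1.2.2.2
    · rw [hb, Xp, XS _ ha] at he; exact absurd he (hxc _ ha).1.2.1
    · rw [hb, Xt, XS _ ha] at he; exact absurd he (hxc _ ha).1.2.2.2
    · rw [XS _ ha, XS _ hb] at he
      exact hxi _ _ ha hb he
  · intro a b h h' he
    rcases Yc a h with ha | ha <;> rcases Yc b h' with hb | hb
    · omega
    · rw [ha, Yp, YS _ hb] at he; exact absurd he.symm (hyc _ hb).1.2.2.1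
    · rw [hb, Yp, YS _ ha] at he; exact absurd he (hyc _ ha).1.2.2.1
    · rw [YS _ ha, YS _ hb] at he
      exact hyi _ _ ha hb he
  · intro a b h h' he
    rcases Xc a h with ha | ha | ha <;> rcases Yc b h' with hb | hb
    · rw [ha, hb, Xp, Yp] at he; exact e4 he
    · rw [ha, Xp, YS _ hb] at he; exact (hyc _ hb).1.2.1 he.symm
    · rw [ha, hb, Xt, Yp] at he; exact e6 he.symm
    · rw [ha, Xt, YS _ hb] at he; exact (hyc _ hb).1.2.2.2 he.symm
    · rw [hb, Yp, XS _ ha] at he; exact (hxc _ ha).1.2.2.1 he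
    · rw [XS _ ha, YS _ hb] at he; exact hxy _ _ ha hb he
  · intro a h he
    rcases Xc a h with ha | ha | ha
    · rw [ha, Xp] at he; exact e1 he
    · rw [ha, Xt] at he; exact e3 he
    · rw [XS _ ha] at he; exact (hxc _ ha).1.1 he
  · intro a h he
    rcases Yc a h with ha | ha
    · rw [ha, Yp] at he; exact e2 he
    · rw [YS _ ha] at he; exact (hyc _ ha).1.1 he
  · intro u hu1 hu2 hu3
    apply hrest u ⟨hu1, ?_, ?_, ?_⟩ (by simp)
    · intro m hm
      have a1 := hu2 m (by omega)
      have a2 := hu3 m (by omega)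
      rw [XS m hm] at a1; rw [YS m hm] at a2
      exact ⟨a1, a2⟩
    · have := hu2 (t - 1) (by omega); rwa [Xp] at this
    · have := hu3 (t - 1) (by omega); rwa [Yp] at this
    · have := hu2 t (by omega); rwa [Xt] at this
  · intro hMn a hm
    rcases Xc a hm with ha | ha | ha
    · refine ⟨[0, 2 * (t - 1) + 2], by simp; omega, ?_, ?_⟩
      · intro v
        simp only [List.mem_cons, List.not_mem_nil, or_false, exists_eq_or_imp, exists_eq_left,
          FXY_zero, FXY_even]
        rw [ha, Xp, Yp, hj']
      · intro a b ha
        rw [G5_adj]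
        simp only [List.mem_cons, List.not_mem_nil, or_false]
        omega
    · refine ⟨[0, 2 * (t - 1) + 2], by simp; omega, ?_, ?_⟩
      · intro v
        simp only [List.mem_cons, List.not_mem_nil, or_false, exists_eq_or_imp, exists_eq_left,
          FXY_zero, FXY_even]
        rw [ha, Xt, Yp, hr']
      · intro a b ha
        rw [G5_adj]
        simp only [List.mem_cons, List.not_mem_nil, or_false]
        omega
    · refine ⟨[0, 2 * a + 2], by simp; omega, ?_, ?_⟩
      · intro v
        simp only [List.mem_cons, List.not_mem_nil, or_false, exists_eq_or_imp, exists_eq_left,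
          FXY_zero, FXY_even]
        rw [XS _ ha, YS _ ha, hx _ ha]
      · intro a b ha
        rw [G5_adj]
        simp only [List.mem_cons, List.not_mem_nil, or_false]
        omega
  · intro hMn a hm
    rcases Yc a hm with ha | ha
    · refine ⟨[2 * (t - 1) + 1, 2 * t + 1], by simp, ?_, ?_⟩
      · intro v
        simp only [List.mem_cons, List.not_mem_nil, or_false, exists_eq_or_imp, exists_eq_left,
          FXY_odd]
        rw [ha, Xp, Yp, Xt, hl']
      · intro a b ha
        rw [G5_adj]
        simp only [List.mem_cons, List.not_mem_nil, or_false]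
        omega
    · refine ⟨[0, 2 * a + 1], by simp; omega, ?_, ?_⟩
      · intro v
        simp only [List.mem_cons, List.not_mem_nil, or_false, exists_eq_or_imp, exists_eq_left,
          FXY_zero, FXY_odd]
        rw [XS _ ha, YS _ ha, hy _ ha]
      · intro a b ha
        rw [G5_adj]
        simp only [List.mem_cons, List.not_mem_nil, or_false]
        omega
  · intro hMn a b ha
    rw [G5_adj]
    omega

end

open Finset

section
variable {V β : Type*} {G : SimpleGraph V} [Fintype V] [Fintype β]

theorem count_lower (hG : G.Connected) {B : β → Blk G} (hB : IsDecomp B) (n t : ℕ)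
    (hn : Fintype.card V = n)
    (ht : (univ.filter (fun b => (B b).k ≠ 2)).card = t) (b0 : Option β)
    (hb0 : ∀ b, b0 = some b → 4 ≤ (B b).k) :
    2 * t + 1 + (if b0 = none then 0 else 1) ≤ n := by
  classical
  have h := decomp_count hG B hB
  rw [hn] at h
  have h1 : ∑ b, ((if (B b).k ≠ 2 then 2 else 0) + (if b0 = some b then 1 else 0) : ℝ) ≤
      ∑ b, (((B b).k : ℝ) - 1) := by
    apply Finset.sum_le_sum
    intro b _
    have hk := (B b).hk
    by_cases e : b0 = some b
    · have h4 := hb0 b e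
      have h4' : (4:ℝ) ≤ (B b).k := by exact_mod_cast h4
      rw [if_pos e]; split_ifs <;> linarith
    · rw [if_neg e]
      split_ifs with e2
      · have : 3 ≤ (B b).k := by omega
        have : (3:ℝ) ≤ (B b).k := by exact_mod_cast this
        linarith
      · have : (2:ℝ) ≤ (B b).k := by exact_mod_cast hk
        linarith
  rw [Finset.sum_add_distrib, h, ← Finset.sum_filter] at h1
  have h2 : ∑ b : β, (if b0 = some b then (1:ℝ) else 0) = if b0 = none then 0 else 1 := by
    cases b0 <;> simp
  rw [h2, Finset.sum_const, ht] at h1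
  have h3 : (2 * t + 1 + (if b0 = none then 0 else 1) : ℝ) ≤ n := by
    rw [nsmul_eq_mul] at h1; linarith
  split_ifs at h3 ⊢ <;> exact_mod_cast h3

theorem main_lower (hG : G.Connected) {B : β → Blk G} (hB : IsDecomp B) (n t : ℕ)
    (hn25 : 25 ≤ n) (hn : Fintype.card V = n) (ht1 : 1 ≤ t)
    (ht : (univ.filter (fun b => (B b).k ≠ 2)).card = t)
    (hnot0 : ¬ Nonempty (G ≃g G0 n t)) (hnot5 : ¬ Nonempty (G ≃g G5g n t)) :
    (8 * (n:ℝ) - 36 + 4 * t) / 3 ≤ ∑ b, (B b).exc n t ∧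
    (∑ b, (B b).exc n t = (8 * (n:ℝ) - 36 + 4 * t) / 3 → Nonempty (G ≃g G4g n t)) := by
  classical
  have hn' : (25:ℝ) ≤ n := by exact_mod_cast hn25
  have ht' : (1:ℝ) ≤ t := by exact_mod_cast ht1
  have hcl := fun b => blk_class hG (B b) n t hn25 ht1 hn (sum_s_val hG B hB n t hn ht b)
  have h0 : ∀ b, 0 ≤ (B b).exc n t := fun b => (hcl b).1
  have hle : ∀ b, (B b).exc n t ≤ ∑ b, (B b).exc n t := fun b =>
    Finset.single_le_sum (f := fun b => (B b).exc n t) (fun i _ => h0 i) (mem_univ b)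
  have hle2 : ∀ b b', b ≠ b' → (B b).exc n t + (B b').exc n t ≤ ∑ b, (B b).exc n t := by
    intro b b' hbb
    rw [← Finset.sum_pair (f := fun b => (B b).exc n t) hbb]
    exact Finset.sum_le_sum_of_subset_of_nonneg (subset_univ _) (fun i _ _ => h0 i)
  by_cases hst : ∃ b, (8 * (n:ℝ) - 36 + 4 * t) / 3 < (B b).exc n t
  · obtain ⟨b, hb⟩ := hst
    have := hle b
    exact ⟨by linarith, fun h => by linarith⟩
  by_cases hT : ∃ b, (B b).Tee ∧ (8 * (n:ℝ) - 36 + 4 * t) / 3 ≤ (B b).exc n t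
  · obtain ⟨b0, hT, hb0⟩ := hT
    refine ⟨hb0.trans (hle b0), fun heq => ?_⟩
    have hz : ∀ b, b ≠ b0 → (B b).Star ∧ (B b).k ≤ 3 := by
      intro b hb
      have h1 := hle2 b b0 hb
      rcases (hcl b).2 with h | ⟨_, _, h⟩ | ⟨_, h⟩ | h
      · exact h
      all_goals exfalso; linarith
    have hex : ∀ b, ∃ i : Fin (B b).k, b ≠ b0 → ∀ j, j ≠ i → (B b).a j = 0 := by
      intro b
      by_cases hb : b = b0
      · exact ⟨⟨0, by have := (B b).hk; omega⟩, fun h => absurd hb h⟩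
      · obtain ⟨i, hi⟩ := (hz b hb).1
        exact ⟨i, fun _ => hi⟩
    choose ctr hctr using hex
    exact iso_G4 hG hB n t hn ht1 ht ctr b0 hT
      (fun b hb j hj => (B b).sing_of_a j (hctr b hb j hj)) (fun b hb => (hz b hb).2)
  · have hS : ∀ b, (B b).Star ∧ ((B b).k ≤ 3 ∨
        ((B b).k = 4 ∧ (5 * (n:ℝ) - 31 + t) / 3 ≤ (B b).exc n t)) := by
      intro b
      rcases (hcl b).2 with h | h | h | h
      · exact ⟨h.1, Or.inl h.2⟩
      · exact ⟨h.1, Or.inr h.2⟩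
      · exact absurd ⟨b, h⟩ hT
      · exact absurd ⟨b, h⟩ hst
    choose ctr hctr using fun b => (hS b).1
    have hs : ∀ b, ∀ j, j ≠ ctr b → (B b).Sing j := fun b j hj => (B b).sing_of_a j (hctr b j hj)
    by_cases h4 : ∃ b, (B b).k = 4
    · obtain ⟨b0, hb0⟩ := h4
      have hb0' : (5 * (n:ℝ) - 31 + t) / 3 ≤ (B b0).exc n t := by
        rcases (hS b0).2 with h | h
        · omega
        · exact h.2
      by_cases h5 : ∃ b, b ≠ b0 ∧ (B b).k = 4
      · obtain ⟨b1, hb1, hb14⟩ := h5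
        have hb1' : (5 * (n:ℝ) - 31 + t) / 3 ≤ (B b1).exc n t := by
          rcases (hS b1).2 with h | h
          · omega
          · exact h.2
        have hc := count_lower hG hB n t hn ht (some b0) (by intro b hb; cases hb; omega)
        simp at hc
        have hc' : (2 * (t:ℝ) + 1 + 1) ≤ n := by exact_mod_cast hc
        have := hle2 b1 b0 hb1
        exact ⟨by linarith, fun h => by linarith⟩
      · exfalso
        apply hnot5
        refine iso_G5 hG hB n t hn ht1 ht ctr b0 hb0 hs ?_
        intro b hb
        rcases (hS b).2 with h | h
        · exact h
        · exact absurd ⟨b, hb, h.1⟩ h5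
    · exfalso
      apply hnot0
      refine iso_G0 hG hB n t hn ht1 ht ctr hs ?_
      intro b
      rcases (hS b).2 with h | h
      · exact h
      · exact absurd ⟨b, h.1⟩ h4

end

open Finset

theorem fin3_sum {k : ℕ} (hk : k = 3) {i j l : Fin k} (hij : i ≠ j) (hil : i ≠ l) (hjl : j ≠ l)
    (f : Fin k → ℝ) : ∑ m, f m = f i + f j + f l := by
  classical
  have h : (univ : Finset (Fin k)) = {i, j, l} := by
    subst hk
    revert i j l; decide
  rw [h, Finset.sum_insert (by simp [hij, hil]), Finset.sum_insert (by simp [hjl]),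
    Finset.sum_singleton]; ring

theorem rr_three' {k : ℕ} (hk : k = 3) {i j : Fin k} (h : i ≠ j) : rr k i j = 2 / 3 := by
  subst hk; exact rr_three i j h

theorem cyc_two_nb {k : ℕ} (hk : 4 ≤ k) (i : Fin k) : ∃ m1 m2, m1 ≠ m2 ∧
    (SimpleGraph.cycleGraph k).Adj i m1 ∧ (SimpleGraph.cycleGraph k).Adj i m2 := by
  have hi := i.isLt
  by_cases h0 : i.val = 0
  · refine ⟨⟨1, by omega⟩, ⟨k - 1, by omega⟩, ?_, ?_, ?_⟩
    · rw [ne_eq, Fin.ext_iff]; simp only; omega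
    · rw [cycAdj_iff (by omega)]; simp only; omega
    · rw [cycAdj_iff (by omega)]; simp only; omega
  by_cases h1 : i.val + 1 = k
  · refine ⟨⟨0, by omega⟩, ⟨i.val - 1, by omega⟩, ?_, ?_, ?_⟩
    · rw [ne_eq, Fin.ext_iff]; simp only; omega
    · rw [cycAdj_iff (by omega)]; first | omega | (simp; done) | (simp; omega)
    · rw [cycAdj_iff (by omega)]; simp only; omega
  · refine ⟨⟨i.val + 1, by omega⟩, ⟨i.val - 1, by omega⟩, ?_, ?_, ?_⟩
    · rw [ne_eq, Fin.ext_iff]; simp only; omega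
    · rw [cycAdj_iff (by omega)]; first | omega | (simp; done) | (simp; omega)
    · rw [cycAdj_iff (by omega)]; simp only; omega

theorem cyc_non_nb {k : ℕ} (hk : 4 ≤ k) (i : Fin k) : ∃ j, j ≠ i ∧
    ¬ (SimpleGraph.cycleGraph k).Adj i j := by
  have hi := i.isLt
  by_cases h1 : i.val + 2 < k
  · refine ⟨⟨i.val + 2, by omega⟩, ?_, ?_⟩
    · rw [ne_eq, Fin.ext_iff]; simp only; omega
    · rw [cycAdj_iff (by omega)]; simp only; omega
  · refine ⟨⟨i.val - 2, by omega⟩, ?_, ?_⟩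
    · rw [ne_eq, Fin.ext_iff]; simp only; omega
    · rw [cycAdj_iff (by omega)]; simp only; omega

section
variable {V β : Type*} {G : SimpleGraph V} [Fintype V] [Fintype β]

theorem blk_conv (hG : G.Connected) (B : Blk G) (n t : ℕ)
    (hn : Fintype.card V = n) (hs : ∑ i, B.s i = if B.k = 2 then (t:ℝ) else t - 1)
    (z p q r : V) (hz : ∀ w, w ≠ z → w ≠ p → G.Adj z w) (hp : ∀ w, G.Adj p w → w = q)
    (hpq : G.Adj p q) (hqr : G.Adj q r) (hrz : r ≠ z) (hrp : r ≠ p) (hqz : q ≠ z) :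
    B.exc n t = 0 ∨ (B.exc n t = (8 * (n:ℝ) - 36 + 4 * t) / 3 ∧ B.pr z ≠ B.pr q) := by
  classical
  have L1 : ∀ w, w ≠ p → B.pr w ≠ B.pr z →
      w = B.c (B.pr w) ∧ z = B.c (B.pr z) ∧
        (SimpleGraph.cycleGraph B.k).Adj (B.pr z) (B.pr w) := by
    intro w hwp hw
    have hadj := hz w (fun h => hw (by rw [h])) hwp
    obtain ⟨h1, h2, h3⟩ := B.cross _ _ hadj hw.symm
    exact ⟨h2, h1, h3⟩
  have L2 : ∀ j, j ≠ B.pr z → B.fib j ⊆ {B.c j, p} := by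
    intro j hj w hw
    rw [B.mem_fib] at hw
    rw [Finset.mem_insert, Finset.mem_singleton]
    by_cases h : w = p
    · exact Or.inr h
    · left
      have := (L1 w h (by rw [hw]; exact hj)).1
      rwa [hw] at this
  have L3 : ∀ j, j ≠ B.pr z → B.a j ≤ 1 := by
    intro j hj
    have h1 := (Finset.card_le_card (L2 j hj)).trans Finset.card_le_two
    rw [B.fib_card] at h1; omega
  have L4 : ∀ j, j ≠ B.pr z → B.a j ≠ 0 → p ≠ B.c j ∧ B.pr p = j := by
    intro j hj ha
    constructor
    · intro h
      have h1 := Finset.card_le_card (L2 j hj)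
      rw [h, B.fib_card] at h1
      simp at h1; exact ha h1
    · by_contra h
      have h2 : B.fib j ⊆ {B.c j} := by
        intro w hw
        have h3 := L2 j hj hw
        rw [Finset.mem_insert, Finset.mem_singleton] at h3
        rw [Finset.mem_singleton]
        rcases h3 with h3 | h3
        · exact h3
        · rw [B.mem_fib] at hw; rw [h3] at hw; exact absurd hw h
      have h1 := Finset.card_le_card h2
      rw [B.fib_card] at h1
      simp at h1; exact ha h1
  have hk3 : B.k ≤ 3 := by
    by_contra hk
    have hk4 : 4 ≤ B.k := by omega
    obtain ⟨j, hj, hnadj⟩ := cyc_non_nb hk4 (B.pr z)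
    by_cases h : B.c j = p
    · obtain ⟨m1, m2, hm, h1, h2⟩ := cyc_two_nb hk4 j
      have e1 := hp _ (h ▸ B.adj _ _ h1)
      have e2 := hp _ (h ▸ B.adj _ _ h2)
      exact hm (B.c_inj (e1.trans e2.symm))
    · have := (L1 _ h (by rw [B.hpr]; exact hj)).2.2
      rw [B.hpr] at this
      exact hnadj this
  have hk2 := B.hk
  have hbase : baseExc B.k n t = 0 := by
    have : B.k = 2 ∨ B.k = 3 := by omega
    unfold baseExc
    rcases this with h | h
    · simp [h]
    · rw [h]; norm_num; ring
  by_cases hA : ∀ j, j ≠ B.pr z → B.a j = 0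
  · left
    rw [Blk.exc, hbase, zero_add, Blk.Q]
    apply Finset.sum_eq_zero; intro i1 _
    apply Finset.sum_eq_zero; intro i2 _
    by_cases e : i1 = i2
    · rw [e, rr_self, mul_zero]
    by_cases e2 : i2 = B.pr z
    · have e1 : i1 ≠ B.pr z := fun h => e (h.trans e2.symm)
      have h1 := hA i1 e1
      rw [h1, B.s_small hG i1 (by omega)]; simp
    · rw [hA i2 e2]; simp
  · right
    push Not at hA
    obtain ⟨j, hj, haj⟩ := hA
    obtain ⟨hpj, hprp⟩ := L4 j hj haj
    have haj1 : B.a j = 1 := by have := L3 j hj; omega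
    have hprq : B.pr q = j := by
      by_contra h
      have := (B.cross _ _ hpq (by rw [hprp]; exact fun h' => h h'.symm)).1
      rw [hprp] at this
      exact hpj this
    obtain ⟨hqc, hzc, -⟩ := L1 q hpq.ne' (by rw [hprq]; exact hj)
    refine ⟨?_, by rw [hprq]; exact hj.symm⟩
    have hrj : B.pr r ≠ j := by
      intro h
      have := (L1 r hrp (by rw [h]; exact hj)).1
      rw [h] at this
      rw [hprq] at hqc
      exact hqr.ne (hqc.trans this.symm)
    have hri : B.pr r ≠ B.pr z := by
      intro h
      have := (B.cross _ _ hqr (by rw [hprq]; exact hrj.symm)).2.1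
      rw [h, ← hzc] at this
      exact hrz this
    have hkk : B.k = 3 := by
      by_contra h
      have h2 : B.k = 2 := by omega
      have h1 := (B.pr r).isLt
      have h3 := (B.pr z).isLt
      have h4 := j.isLt
      rw [ne_eq, Fin.ext_iff] at hrj hri hj
      omega
    have hal : B.a (B.pr r) = 0 := by
      by_contra h
      exact hrj ((L4 _ hri h).2.symm.trans hprp)
    have hsj := B.s_small hG j (by omega)
    have hsl := B.s_small hG (B.pr r) (by omega)
    have hS := fin3_sum hkk hj.symm hri.symm hrj.symm B.s
    have hAs := fin3_sum hkk hj.symm hri.symm hrj.symm (fun m => (B.a m : ℝ))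
    have hA2 := B.sum_a
    rw [hn] at hA2
    have hA3 : (∑ m, (B.a m : ℝ)) + B.k = n := by exact_mod_cast hA2
    rw [hAs, hkk, haj1, hal] at hA3
    rw [hs, if_neg (by omega), hsj, hsl] at hS
    rw [Blk.exc, hbase, zero_add, Blk.Q]
    simp only [fin3_sum hkk hj.symm hri.symm hrj.symm]
    simp only [rr_self, rr_three' hkk hj, rr_three' hkk hj.symm, rr_three' hkk hri,
      rr_three' hkk hri.symm, rr_three' hkk hrj, rr_three' hkk hrj.symm, haj1, hal, hsj, hsl]
    push_cast at hA3 ⊢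
    have ha : (B.a (B.pr z) : ℝ) = n - 4 := by linarith
    have hsz : B.s (B.pr z) = t - 1 := by linarith
    rw [ha, hsz]; ring

theorem main_conv (hG : G.Connected) {B : β → Blk G} (hB : IsDecomp B) (n t : ℕ)
    (hn25 : 25 ≤ n) (hn : Fintype.card V = n) (ht1 : 1 ≤ t)
    (ht : (univ.filter (fun b => (B b).k ≠ 2)).card = t)
    (hnot0 : ¬ Nonempty (G ≃g G0 n t)) (h4 : Nonempty (G ≃g G4g n t)) :
    ∑ b, (B b).exc n t ≤ (8 * (n:ℝ) - 36 + 4 * t) / 3 := by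
  classical
  obtain ⟨φ⟩ := h4
  have hc := count_lower hG hB n t hn ht none (by simp)
  simp at hc
  by_cases hlt : n ≤ 2 * t + 1
  · exfalso
    apply hnot0
    have : G4g n t = G0 n t := by
      ext a b
      rw [G4_adj, G0_adj]
      have := a.isLt
      have := b.isLt
      omega
    rw [← this]
    exact ⟨φ⟩
  set z := φ.symm ⟨0, by omega⟩ with hzdef
  set p := φ.symm ⟨2 * t + 1, by omega⟩ with hpdef
  set q := φ.symm ⟨1, by omega⟩ with hqdef
  set r := φ.symm ⟨2, by omega⟩ with hrdef
  have hadj : ∀ x y, G.Adj (φ.symm x) (φ.symm y) ↔ (G4g n t).Adj x y := fun x y =>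
    φ.symm.map_adj_iff
  have hsurj : ∀ w, ∃ x, w = φ.symm x := fun w => ⟨φ w, by simp⟩
  have hz : ∀ w, w ≠ z → w ≠ p → G.Adj z w := by
    intro w h1 h2
    obtain ⟨x, rfl⟩ := hsurj w
    have e1 : x.val ≠ 0 := fun h => h1 (by rw [hzdef]; congr 1; exact Fin.ext h)
    have e2 : x.val ≠ 2 * t + 1 := fun h => h2 (by rw [hpdef]; congr 1; exact Fin.ext h)
    rw [hzdef, hadj, G4_adj]; first | omega | (simp; done) | (simp; omega)
  have hp : ∀ w, G.Adj p w → w = q := by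
    intro w h1
    obtain ⟨x, rfl⟩ := hsurj w
    rw [hpdef, hadj, G4_adj] at h1
    simp only at h1
    rw [hqdef]; congr 1; apply Fin.ext; simp only; omega
  have hpq : G.Adj p q := by
    rw [hpdef, hqdef, hadj, G4_adj]; first | omega | (simp; done) | (simp; omega)
  have hqr : G.Adj q r := by
    rw [hqdef, hrdef, hadj, G4_adj]; first | omega | (simp; done) | (simp; omega)
  have hne : ∀ x y : Fin n, x.val ≠ y.val → φ.symm x ≠ φ.symm y := by
    intro x y h he
    exact h (by rw [φ.symm.injective he])
  have hrz : r ≠ z := hne _ _ (by simp)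
  have hrp : r ≠ p := hne _ _ (by simp only; omega)
  have hqz : q ≠ z := hne _ _ (by simp)
  have key := fun b => blk_conv hG (B b) n t hn (sum_s_val hG B hB n t hn ht b) z p q r
    hz hp hpq hqr hrz hrp hqz
  obtain ⟨b0, hb0, huniq⟩ := hB z q (hz q hqz hpq.ne')
  have hX : 0 ≤ (8 * (n:ℝ) - 36 + 4 * t) / 3 := by
    have hn' : (25:ℝ) ≤ n := by exact_mod_cast hn25
    have ht' : (0:ℝ) ≤ t := Nat.cast_nonneg _
    linarith
  rw [Finset.sum_eq_single b0]
  · rcases key b0 with h | h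
    · rw [h]; exact hX
    · exact h.1.le
  · intro b _ hb
    rcases key b with h | h
    · exact h
    · exact absurd (huniq b h.2) hb
  · simp

end

/-- Corollary 5.2: for `G ∈ Cact(n;t)` not isomorphic to `G⁰(n,t)` or `G5`, with
`n ≥ 25`, `t ≥ 1`, one has
`D_R(G) ≥ -(4/3)t² + ((4/3)n - 10/3)t + 3n² - (13/3)n - 8`,
with equality iff `G ≅ G4`. -/
theorem stmt_19 (n t : ℕ) (hn : 25 ≤ n) (ht : 1 ≤ t)
    {V : Type*} [Finite V] (G : SimpleGraph V) (hG : MemCact n t G)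
    (hnot0 : ¬ Nonempty (G ≃g G0 n t)) (hnot5 : ¬ Nonempty (G ≃g G5g n t)) :
    -(4 / 3) * (t : ℝ) ^ 2 + ((4 / 3) * (n : ℝ) - 10 / 3) * t
        + 3 * (n : ℝ) ^ 2 - (13 / 3) * n - 8 ≤ degRes G ∧
    (degRes G = -(4 / 3) * (t : ℝ) ^ 2 + ((4 / 3) * (n : ℝ) - 10 / 3) * t
        + 3 * (n : ℝ) ^ 2 - (13 / 3) * n - 8 ↔ Nonempty (G ≃g G4g n t)) := by
  classical
  obtain ⟨hC, hcard, hcyc⟩ := hG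
  haveI : Fintype V := Fintype.ofFinite V
  rw [Nat.card_eq_fintype_card] at hcard
  obtain ⟨β, hβ, B, hB, hcnt⟩ := exists_decomp hC
  rw [hcyc] at hcnt
  have hform := degRes_formula hC.1 B hB n t hcard hcnt
  obtain ⟨hlow, heq⟩ := main_lower hC.1 hB n t hn hcard ht hcnt hnot0 hnot5
  have hb : -(4 / 3) * (t : ℝ) ^ 2 + ((4 / 3) * (n : ℝ) - 10 / 3) * t
        + 3 * (n : ℝ) ^ 2 - (13 / 3) * n - 8 =
      t * ((8/3) * (2 * n + t - 4)) + ((n:ℝ) - 1 - 2 * t) * (3 * n - 4 + 2 * t)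
        + (8 * (n:ℝ) - 36 + 4 * t) / 3 := by ring
  rw [hb, hform]
  refine ⟨by linarith, fun h => heq (by linarith), fun h => ?_⟩
  have := main_conv hC.1 hB n t hn hcard ht hcnt hnot0 h
  linarith
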